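/- There is a constant C > 0 such that for every 1 ≤ p ≤ ∞ and every integer n ≥ 2, one has (1/C) · (n / log n)^{1 - 1/min(p,2)} ≤ sup_m χ_mon(𝒫(^m ℓ_p^n))^{1/m} ≤ C · (n / log n)^{1 - 1/min(p,2)}, where the supremum is over all positive integers m. -/

import Mathlib

open Finset
open scoped ENNReal

/-- Evaluation of the `m`-homogeneous polynomial on `ℂ^n` with coefficient family `a`
(indexed by the multi-indices `α` with `|α| = m`) at the point `z`. -/
noncomputable def mhEval (n m : ℕ) (a : (Fin n → ℕ) → ℂ) (z : Fin n → ℂ) : ℂ :=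
  ∑ α ∈ Finset.Nat.antidiagonalTuple n m, a α * ∏ i, z i ^ α i

/-- The `ℓ_p`-norm of a vector in `ℂ^n`, for `1 ≤ p ≤ ∞`. -/
noncomputable def pNorm (p : ℝ≥0∞) {n : ℕ} (z : Fin n → ℂ) : ℝ :=
  if p = ∞ then ⨆ i, ‖z i‖ else (∑ i, ‖z i‖ ^ p.toReal) ^ (1 / p.toReal)

/-- The unconditional basis constant `χ_mon(𝒫(^m ℓ_p^n))` of the monomials in the space
of `m`-homogeneous polynomials on `ℓ_p^n`: the best constant `c` such that
`sup_{z ∈ B} |∑ ε_α a_α z^α| ≤ c · sup_{z ∈ B} |∑ a_α z^α|` for all coefficients `a` and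
all scalars `|ε_α| ≤ 1`, where `B` is the open unit ball of `ℓ_p^n`. -/
noncomputable def chiMon (p : ℝ≥0∞) (m n : ℕ) : ℝ :=
  sInf {c : ℝ | 0 ≤ c ∧ ∀ (a ε : (Fin n → ℕ) → ℂ), (∀ α, ‖ε α‖ ≤ 1) →
    ∀ z : Fin n → ℂ, pNorm p z < 1 →
      ‖mhEval n m (fun α => ε α * a α) z‖
        ≤ c * sSup {x : ℝ | ∃ w : Fin n → ℂ, pNorm p w < 1 ∧ x = ‖mhEval n m a w‖}}

/-!
Let `s = 1 - 1 / min p 2`.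

*Upper bound.* By Cauchy's estimate in one complex direction, the derivative of an
`m`-homogeneous polynomial on `B` is at most `e * m` times its norm. Hence the sum of the absolute
values of its monomials can be controlled through the partial derivatives, which have degree
`m - 1`: for `p ≥ 2` through the `L²`-`L¹` comparison on the torus and the Cauchy–Schwarz
inequality, for `p ≤ 2` through Cauchy's estimate for the coefficients and Hölder's inequality.
Either way the loss is `c ^ m * N ^ s`, where `N` is the number of monomials of degree `m - 1`.
That the degree is `m - 1` and not `m` is what produces the logarithm: `N` is at most
`(4 * n / log n) ^ m`, whereas the number of monomials of degree `m = 1` is `n`.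

*Lower bound.* Let `q = min p 2`. Multiply the coefficients of `(∑ i, z i) ^ m` by random signs. On
the ball of `ℓ_q^n` the resulting polynomial is, with positive probability, at most
`(m !) ^ (1 - 1 / q)` up to a factor of the order of `n * m ^ 2`, while `(∑ i, z i) ^ m` itself
has the value `n ^ m` at `(1, …, 1)`, of `ℓ_q`-norm `n ^ (1 / q)`. The factor is harmless once
`n ≤ e ^ m`, and `m = ⌈log n⌉` then gives `χ_mon ^ (1 / m) ≥ c * (n / m) ^ s`.
-/

open Finset.Nat (antidiagonalTuple)
open scoped ComplexConjugate

section MultiIndex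

lemma le_of_mem_antidiagonalTuple {n m : ℕ} {α : Fin n → ℕ} (hα : α ∈ antidiagonalTuple n m)
    (i : Fin n) : α i ≤ m :=
  (single_le_sum (f := α) (fun _ _ => Nat.zero_le _) (mem_univ i)).trans_eq
    (Nat.mem_antidiagonalTuple.1 hα)

lemma add_mem_antidiagonalTuple {n k l : ℕ} {α β : Fin n → ℕ} (hα : α ∈ antidiagonalTuple n k)
    (hβ : β ∈ antidiagonalTuple n l) : α + β ∈ antidiagonalTuple n (k + l) := by
  rw [Nat.mem_antidiagonalTuple] at *
  simp only [Pi.add_apply, sum_add_distrib, hα, hβ]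

lemma single_one_mem_antidiagonalTuple {n : ℕ} (i : Fin n) :
    Pi.single i 1 ∈ antidiagonalTuple n 1 :=
  Nat.mem_antidiagonalTuple.2 (Fintype.sum_pi_single' i 1)

lemma card_filter_add_eq_le {ι : Type*} [Fintype ι] (S : Finset ((ι → ℕ) × (ι → ℕ)))
    (γ : ι → ℕ) :
    #{x ∈ S | x.1 + x.2 = γ} ≤ 2 ^ ∑ i, γ i := by
  classical
  calc #{x ∈ S | x.1 + x.2 = γ}
      ≤ #(Fintype.piFinset fun i => range (γ i + 1)) := by
        refine card_le_card_of_injOn Prod.fst (fun x hx => ?_) fun x hx y hy hxy => ?_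
        · simp only [mem_coe, Fintype.mem_piFinset, mem_range, Nat.lt_succ_iff]
          exact fun i => (Nat.le_add_right _ _).trans_eq (congrFun (mem_filter.1 hx).2 i)
        · have hsum := (mem_filter.1 hx).2.trans (mem_filter.1 hy).2.symm
          exact Prod.ext hxy (add_left_cancel (hsum.trans (by rw [hxy])))
    _ = ∏ i, (γ i + 1) := by simp only [Fintype.card_piFinset, card_range]
    _ ≤ ∏ i, 2 ^ γ i := prod_le_prod' fun i _ => Nat.lt_two_pow_self
    _ = 2 ^ ∑ i, γ i := prod_pow_eq_pow_sum _ _ _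

/-- The factor `α i` annihilates the terms that are not of the form `β + Pi.single i 1`. -/
lemma sum_antidiagonalTuple_succ_mul {R : Type*} [CommSemiring R] {n : ℕ} (k : ℕ) (i : Fin n)
    (f : (Fin n → ℕ) → R) :
    ∑ α ∈ antidiagonalTuple n (k + 1), (α i : R) * f α =
      ∑ β ∈ antidiagonalTuple n k, ((β i : R) + 1) * f (β + Pi.single i 1) := by
  symm
  refine sum_of_injOn (· + Pi.single i 1) (fun _ _ _ _ => add_right_cancel)
    (fun β hβ => add_mem_antidiagonalTuple hβ (single_one_mem_antidiagonalTuple i))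
    (fun α hα hα' => ?_) (fun β _ => by simp)
  suffices α i = 0 by simp [this]
  by_contra hi
  have hle : Pi.single i 1 ≤ α := by
    intro j
    rcases eq_or_ne j i with rfl | hj
    · simpa using Nat.one_le_iff_ne_zero.2 hi
    · simp [hj]
  obtain ⟨β, rfl⟩ := exists_add_of_le hle
  refine hα' ⟨β, ?_, add_comm _ _⟩
  rw [mem_coe, Nat.mem_antidiagonalTuple] at *
  simp only [Pi.add_apply, sum_add_distrib, Fintype.sum_pi_single'] at hα
  lia

end MultiIndex

section Evaluation

variable {n k l m : ℕ}

/-- The value at `(‖u i‖)` of the `m`-homogeneous polynomial with coefficients `‖a α‖`. It dominates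
every polynomial obtained from `a` by multiplying the coefficients by numbers of modulus at most
one. -/
noncomputable def absEval (m : ℕ) (a : (Fin n → ℕ) → ℂ) (u : Fin n → ℂ) : ℝ :=
  ∑ α ∈ antidiagonalTuple n m, ‖a α‖ * ∏ i, ‖u i‖ ^ α i

lemma norm_mhEval_le_absEval (a : (Fin n → ℕ) → ℂ) (z : Fin n → ℂ) :
    ‖mhEval n m a z‖ ≤ absEval m a z := by
  refine (norm_sum_le _ _).trans_eq ?_
  simp only [absEval, norm_mul, norm_prod, norm_pow]

lemma absEval_mul_le {a ε : (Fin n → ℕ) → ℂ} (hε : ∀ α, ‖ε α‖ ≤ 1) (u : Fin n → ℂ) :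
    absEval m (fun α => ε α * a α) u ≤ absEval m a u := by
  refine sum_le_sum fun α _ => ?_
  rw [norm_mul]
  gcongr
  exact mul_le_of_le_one_left (norm_nonneg _) (hε α)

lemma mhEval_mul_right (a : (Fin n → ℕ) → ℂ) (z w : Fin n → ℂ) :
    mhEval n m a (z * w) = mhEval n m (fun α => a α * ∏ i, z i ^ α i) w := by
  simp only [mhEval, Pi.mul_apply, mul_pow, prod_mul_distrib, mul_assoc]

lemma mhEval_smul (a : (Fin n → ℕ) → ℂ) (t : ℂ) (z : Fin n → ℂ) :
    mhEval n m a (t • z) = t ^ m * mhEval n m a z := by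
  simp only [mhEval, Pi.smul_apply, smul_eq_mul, mul_pow, prod_mul_distrib, mul_sum,
    prod_pow_eq_pow_sum]
  refine sum_congr rfl fun α hα => ?_
  rw [Nat.mem_antidiagonalTuple.1 hα]
  ring

/-- The coefficients of the product of the homogeneous polynomials of degrees `k` and `l` with
coefficient families `a` and `b`. -/
noncomputable def mulCoeff (k l : ℕ) (a b : (Fin n → ℕ) → ℂ) (γ : Fin n → ℕ) : ℂ :=
  ∑ x ∈ antidiagonalTuple n k ×ˢ antidiagonalTuple n l with x.1 + x.2 = γ, a x.1 * b x.2

lemma mhEval_mulCoeff (a b : (Fin n → ℕ) → ℂ) (z : Fin n → ℂ) :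
    mhEval n (k + l) (mulCoeff k l a b) z = mhEval n k a z * mhEval n l b z := by
  have hmaps : ∀ x ∈ antidiagonalTuple n k ×ˢ antidiagonalTuple n l,
      x.1 + x.2 ∈ antidiagonalTuple n (k + l) := fun x hx =>
    add_mem_antidiagonalTuple (mem_product.1 hx).1 (mem_product.1 hx).2
  rw [mhEval, mhEval, mhEval, sum_mul_sum, ← sum_product', ← sum_fiberwise_of_maps_to hmaps]
  refine sum_congr rfl fun γ _ => ?_
  rw [mulCoeff, sum_mul]
  refine sum_congr rfl fun x hx => ?_
  simp only [← (mem_filter.1 hx).2, Pi.add_apply, pow_add, prod_mul_distrib]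
  ring

lemma sum_norm_mulCoeff_sq_le (a b : (Fin n → ℕ) → ℂ) :
    ∑ γ ∈ antidiagonalTuple n (k + l), ‖mulCoeff k l a b γ‖ ^ 2 ≤
      2 ^ (k + l) * ((∑ α ∈ antidiagonalTuple n k, ‖a α‖ ^ 2) *
        ∑ β ∈ antidiagonalTuple n l, ‖b β‖ ^ 2) := by
  set S := antidiagonalTuple n k ×ˢ antidiagonalTuple n l
  have hmaps : ∀ x ∈ S, x.1 + x.2 ∈ antidiagonalTuple n (k + l) := fun x hx =>
    add_mem_antidiagonalTuple (mem_product.1 hx).1 (mem_product.1 hx).2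
  have hterm : ∀ γ ∈ antidiagonalTuple n (k + l), ‖mulCoeff k l a b γ‖ ^ 2 ≤
      2 ^ (k + l) * ∑ x ∈ S with x.1 + x.2 = γ, ‖a x.1‖ ^ 2 * ‖b x.2‖ ^ 2 := fun γ hγ =>
    calc ‖mulCoeff k l a b γ‖ ^ 2
        ≤ (∑ x ∈ S with x.1 + x.2 = γ, ‖a x.1 * b x.2‖) ^ 2 := by
          gcongr
          exact norm_sum_le _ _
      _ ≤ #{x ∈ S | x.1 + x.2 = γ} * ∑ x ∈ S with x.1 + x.2 = γ, ‖a x.1 * b x.2‖ ^ 2 :=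
          sq_sum_le_card_mul_sum_sq
      _ ≤ 2 ^ (k + l) * ∑ x ∈ S with x.1 + x.2 = γ, ‖a x.1‖ ^ 2 * ‖b x.2‖ ^ 2 := by
          simp only [norm_mul, mul_pow]
          gcongr
          exact_mod_cast (card_filter_add_eq_le S γ).trans_eq
            (by rw [Nat.mem_antidiagonalTuple.1 hγ])
  refine (sum_le_sum hterm).trans_eq ?_
  rw [← mul_sum, sum_fiberwise_of_maps_to hmaps (f := fun x => ‖a x.1‖ ^ 2 * ‖b x.2‖ ^ 2),
    sum_product, sum_mul_sum]

end Evaluation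

section DiscreteTorus

variable {ι : Type*} {N : ℕ} [NeZero N]

/-- The point of the torus whose coordinates are the `N`-th roots of unity with exponents `θ`.
Averages over `θ` play the role of integrals over the torus; they agree with them on
trigonometric polynomials of degree less than `N`. -/
noncomputable def torusPoint (θ : ι → ZMod N) (i : ι) : ℂ :=
  ZMod.stdAddChar (θ i)

@[simp]
lemma norm_torusPoint (θ : ι → ZMod N) (i : ι) : ‖torusPoint θ i‖ = 1 :=
  AddChar.norm_apply _ _

lemma sum_stdAddChar_pow_mul_conj_pow {a b : ℕ} (ha : a < N) (hb : b < N) :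
    ∑ x : ZMod N, ZMod.stdAddChar x ^ a * conj (ZMod.stdAddChar x ^ b) =
      if a = b then (N : ℂ) else 0 := by
  have hterm : ∀ x : ZMod N, ZMod.stdAddChar x ^ a * conj (ZMod.stdAddChar x ^ b) =
      ZMod.stdAddChar (x * ((a : ZMod N) - (b : ZMod N))) := fun x => by
    rw [← AddChar.map_nsmul_eq_pow, ← AddChar.map_nsmul_eq_pow, ← AddChar.map_neg_eq_conj,
      ← AddChar.map_add_eq_mul]
    congr 1
    simp only [nsmul_eq_mul]
    ring
  have hcast : (a : ZMod N) = b ↔ a = b := by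
    rw [ZMod.natCast_eq_natCast_iff', Nat.mod_eq_of_lt ha, Nat.mod_eq_of_lt hb]
  simp only [hterm, AddChar.sum_mulShift _ (ZMod.isPrimitive_stdAddChar N), sub_eq_zero, hcast,
    ZMod.card]
  split_ifs <;> simp

variable [Fintype ι]

lemma sum_torusPoint_pow_mul_conj_pow [DecidableEq ι] {α β : ι → ℕ} (hα : ∀ i, α i < N)
    (hβ : ∀ i, β i < N) :
    ∑ θ : ι → ZMod N, (∏ i, torusPoint θ i ^ α i) * conj (∏ i, torusPoint θ i ^ β i) =
      if α = β then (N : ℂ) ^ Fintype.card ι else 0 := by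
  simp only [torusPoint, map_prod, ← prod_mul_distrib]
  rw [← Fintype.prod_sum fun i (x : ZMod N) =>
    ZMod.stdAddChar x ^ α i * conj (ZMod.stdAddChar x ^ β i)]
  simp only [sum_stdAddChar_pow_mul_conj_pow (hα _) (hβ _)]
  split_ifs with h
  · simp [h]
  · obtain ⟨i, hi⟩ := Function.ne_iff.1 h
    exact prod_eq_zero (mem_univ i) (if_neg hi)

lemma sum_norm_sum_torusPoint_sq [DecidableEq ι] {S : Finset (ι → ℕ)}
    (hS : ∀ α ∈ S, ∀ i, α i < N) (c : (ι → ℕ) → ℂ) :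
    ∑ θ : ι → ZMod N, ‖∑ α ∈ S, c α * ∏ i, torusPoint θ i ^ α i‖ ^ 2 =
      N ^ Fintype.card ι * ∑ α ∈ S, ‖c α‖ ^ 2 := by
  have hexpand : ∀ θ : ι → ZMod N, ((‖∑ α ∈ S, c α * ∏ i, torusPoint θ i ^ α i‖ ^ 2 : ℝ) : ℂ) =
      ∑ α ∈ S, ∑ β ∈ S, c α * conj (c β) *
        ((∏ i, torusPoint θ i ^ α i) * conj (∏ i, torusPoint θ i ^ β i)) := fun θ => by
    rw [Complex.ofReal_pow, ← Complex.mul_conj', map_sum, sum_mul_sum]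
    simp only [map_mul, mul_mul_mul_comm]
  suffices h : ∑ θ : ι → ZMod N, ((‖∑ α ∈ S, c α * ∏ i, torusPoint θ i ^ α i‖ ^ 2 : ℝ) : ℂ) =
      N ^ Fintype.card ι * ∑ α ∈ S, ((‖c α‖ ^ 2 : ℝ) : ℂ) by exact_mod_cast h
  simp only [hexpand]
  rw [sum_comm, mul_sum]
  refine sum_congr rfl fun α hα => ?_
  rw [sum_comm]
  calc ∑ β ∈ S, ∑ θ : ι → ZMod N, c α * conj (c β) *
        ((∏ i, torusPoint θ i ^ α i) * conj (∏ i, torusPoint θ i ^ β i))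
      = ∑ β ∈ S, if α = β then c α * conj (c β) * (N : ℂ) ^ Fintype.card ι else 0 := by
        refine sum_congr rfl fun β hβ => ?_
        rw [← mul_sum, sum_torusPoint_pow_mul_conj_pow (hS α hα) (hS β hβ), mul_ite, mul_zero]
    _ = (N : ℂ) ^ Fintype.card ι * ((‖c α‖ ^ 2 : ℝ) : ℂ) := by
        rw [sum_ite_eq, if_pos hα, Complex.mul_conj', Complex.ofReal_pow, mul_comm]

end DiscreteTorus

section TorusAverages

variable {n k N : ℕ} [NeZero N]

lemma sum_norm_mhEval_torusPoint_sq (hN : k < N) (c : (Fin n → ℕ) → ℂ) :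
    ∑ θ : Fin n → ZMod N, ‖mhEval n k c (torusPoint θ)‖ ^ 2 =
      N ^ n * ∑ α ∈ antidiagonalTuple n k, ‖c α‖ ^ 2 := by
  simpa only [mhEval, Fintype.card_fin] using sum_norm_sum_torusPoint_sq
    (fun _ hα i => (le_of_mem_antidiagonalTuple hα i).trans_lt hN) c

lemma sum_norm_mhEval_torusPoint_pow_four_le (hN : k + k < N) (c : (Fin n → ℕ) → ℂ) :
    ∑ θ : Fin n → ZMod N, ‖mhEval n k c (torusPoint θ)‖ ^ 4 ≤
      N ^ n * (4 ^ k * (∑ α ∈ antidiagonalTuple n k, ‖c α‖ ^ 2) ^ 2) := by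
  calc ∑ θ : Fin n → ZMod N, ‖mhEval n k c (torusPoint θ)‖ ^ 4
      = ∑ θ : Fin n → ZMod N, ‖mhEval n (k + k) (mulCoeff k k c c) (torusPoint θ)‖ ^ 2 := by
        refine sum_congr rfl fun θ _ => ?_
        rw [mhEval_mulCoeff, norm_mul]
        ring
    _ = N ^ n * ∑ γ ∈ antidiagonalTuple n (k + k), ‖mulCoeff k k c c γ‖ ^ 2 :=
        sum_norm_mhEval_torusPoint_sq hN _
    _ ≤ N ^ n * (4 ^ k * (∑ α ∈ antidiagonalTuple n k, ‖c α‖ ^ 2) ^ 2) := by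
        gcongr
        refine (sum_norm_mulCoeff_sq_le c c).trans_eq ?_
        rw [← two_mul, pow_mul, ← sq]
        norm_num

/-- Hölder's inequality for the exponents `2/3 · 1 + 1/3 · 4 = 2`. -/
lemma sum_sq_pow_three_le {τ : Type*} (s : Finset τ) {f : τ → ℝ} (hf : ∀ t ∈ s, 0 ≤ f t) :
    (∑ t ∈ s, f t ^ 2) ^ 3 ≤ (∑ t ∈ s, f t) ^ 2 * ∑ t ∈ s, f t ^ 4 := by
  have h13 : (∑ t ∈ s, f t ^ 2) ^ 2 ≤ (∑ t ∈ s, f t) * ∑ t ∈ s, f t ^ 3 :=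
    sum_sq_le_sum_mul_sum_of_sq_le_mul s hf (fun t ht => pow_nonneg (hf t ht) 3)
      fun t _ => le_of_eq (by ring)
  have h24 : (∑ t ∈ s, f t ^ 3) ^ 2 ≤ (∑ t ∈ s, f t ^ 2) * ∑ t ∈ s, f t ^ 4 :=
    sum_sq_le_sum_mul_sum_of_sq_le_mul s (fun t _ => by positivity) (fun t _ => by positivity)
      fun t _ => le_of_eq (by ring)
  have h2 : 0 ≤ ∑ t ∈ s, f t ^ 2 := sum_nonneg fun t _ => by positivity
  have : 0 ≤ ∑ t ∈ s, f t ^ 4 := sum_nonneg fun t _ => by positivity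
  rcases h2.eq_or_lt with h | h
  · rw [← h, zero_pow three_ne_zero]
    positivity
  refine le_of_mul_le_mul_left ?_ h
  calc (∑ t ∈ s, f t ^ 2) * (∑ t ∈ s, f t ^ 2) ^ 3
      = ((∑ t ∈ s, f t ^ 2) ^ 2) ^ 2 := by ring
    _ ≤ ((∑ t ∈ s, f t) * ∑ t ∈ s, f t ^ 3) ^ 2 := by gcongr
    _ = (∑ t ∈ s, f t) ^ 2 * (∑ t ∈ s, f t ^ 3) ^ 2 := mul_pow _ _ _
    _ ≤ (∑ t ∈ s, f t) ^ 2 * ((∑ t ∈ s, f t ^ 2) * ∑ t ∈ s, f t ^ 4) := by gcongr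
    _ = (∑ t ∈ s, f t ^ 2) * ((∑ t ∈ s, f t) ^ 2 * ∑ t ∈ s, f t ^ 4) := by ring

lemma sqrt_sum_norm_sq_le_sum_norm_mhEval_torusPoint (hN : k + k < N) (c : (Fin n → ℕ) → ℂ) :
    (N : ℝ) ^ n * √(∑ α ∈ antidiagonalTuple n k, ‖c α‖ ^ 2) ≤
      2 ^ k * ∑ θ : Fin n → ZMod N, ‖mhEval n k c (torusPoint θ)‖ := by
  set A := ∑ α ∈ antidiagonalTuple n k, ‖c α‖ ^ 2
  set M := ∑ θ : Fin n → ZMod N, ‖mhEval n k c (torusPoint θ)‖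
  have hA : 0 ≤ A := sum_nonneg fun _ _ => by positivity
  have : 0 ≤ M := sum_nonneg fun _ _ => norm_nonneg _
  have hNpos : (0 : ℝ) < N := Nat.cast_pos.2 (NeZero.pos N)
  rcases hA.eq_or_lt with h0 | hA'
  · rw [← h0, Real.sqrt_zero, mul_zero]
    positivity
  have hHolder : ((N : ℝ) ^ n * A) ^ 3 ≤ M ^ 2 * (N ^ n * (4 ^ k * A ^ 2)) :=
    calc ((N : ℝ) ^ n * A) ^ 3
        = (∑ θ : Fin n → ZMod N, ‖mhEval n k c (torusPoint θ)‖ ^ 2) ^ 3 := by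
          rw [sum_norm_mhEval_torusPoint_sq (by lia)]
      _ ≤ M ^ 2 * ∑ θ : Fin n → ZMod N, ‖mhEval n k c (torusPoint θ)‖ ^ 4 :=
          sum_sq_pow_three_le _ fun _ _ => norm_nonneg _
      _ ≤ M ^ 2 * (N ^ n * (4 ^ k * A ^ 2)) := by
          gcongr
          exact sum_norm_mhEval_torusPoint_pow_four_le hN c
  refine le_of_sq_le_sq ?_ (by positivity)
  refine le_of_mul_le_mul_left (a := (N : ℝ) ^ n * A ^ 2) ?_ (by positivity)
  calc (N : ℝ) ^ n * A ^ 2 * (N ^ n * √A) ^ 2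
      = (N ^ n * A) ^ 3 := by rw [mul_pow _ √A, Real.sq_sqrt hA]; ring
    _ ≤ M ^ 2 * (N ^ n * (4 ^ k * A ^ 2)) := hHolder
    _ = N ^ n * A ^ 2 * (2 ^ k * M) ^ 2 := by
        rw [mul_pow, ← pow_mul, mul_comm k, pow_mul]
        norm_num
        ring

/-- Cauchy's estimate, from Parseval's identity on the polycircle of radii `r`. -/
lemma norm_coeff_mul_le_of_forall_norm_mhEval_le {c : (Fin n → ℕ) → ℂ} {r : Fin n → ℝ}
    (hr : ∀ i, 0 ≤ r i) {M : ℝ}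
    (hM : ∀ z : Fin n → ℂ, (∀ i, ‖z i‖ = r i) → ‖mhEval n k c z‖ ≤ M)
    {β : Fin n → ℕ} (hβ : β ∈ antidiagonalTuple n k) : ‖c β‖ * ∏ i, r i ^ β i ≤ M := by
  set z : Fin n → ℂ := fun i => r i
  have hnorm : ∀ i, ‖z i‖ = r i := fun i => by simp [z, hr i]
  have hM0 : 0 ≤ M := (norm_nonneg _).trans (hM z hnorm)
  refine le_of_sq_le_sq ?_ hM0
  have hNpos : (0 : ℝ) < ((k + 1 : ℕ) : ℝ) ^ n := by positivity
  refine le_of_mul_le_mul_left ?_ hNpos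
  calc ((k + 1 : ℕ) : ℝ) ^ n * (‖c β‖ * ∏ i, r i ^ β i) ^ 2
      = ((k + 1 : ℕ) : ℝ) ^ n * ‖c β * ∏ i, z i ^ β i‖ ^ 2 := by
        simp only [norm_mul, norm_prod, norm_pow, hnorm]
    _ ≤ ((k + 1 : ℕ) : ℝ) ^ n *
          ∑ α ∈ antidiagonalTuple n k, ‖c α * ∏ i, z i ^ α i‖ ^ 2 := by
        gcongr
        exact single_le_sum (f := fun α => ‖c α * ∏ i, z i ^ α i‖ ^ 2)
          (fun _ _ => by positivity) hβ
    _ = ∑ θ : Fin n → ZMod (k + 1), ‖mhEval n k c (z * torusPoint θ)‖ ^ 2 := by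
        simp only [mhEval_mul_right]
        exact (sum_norm_mhEval_torusPoint_sq k.lt_succ_self _).symm
    _ ≤ ∑ _θ : Fin n → ZMod (k + 1), M ^ 2 := by
        gcongr with θ
        exact hM _ fun i => by simp [hnorm]
    _ = ((k + 1 : ℕ) : ℝ) ^ n * M ^ 2 := by simp [ZMod.card]

end TorusAverages

section Norm

variable {n m : ℕ} {p : ℝ≥0∞}

lemma pNorm_mono {z w : Fin n → ℂ} (h : ∀ i, ‖z i‖ ≤ ‖w i‖) : pNorm p z ≤ pNorm p w := by
  unfold pNorm
  split_ifs
  · exact ciSup_mono (Set.finite_range _).bddAbove h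
  · gcongr with i
    exact h i

/-- The norm `sup_{z ∈ B} |P(z)|` on `𝒫(^m ℓ_p^n)` of the polynomial with coefficients `a`. -/
noncomputable def polyNorm (p : ℝ≥0∞) (m : ℕ) (a : (Fin n → ℕ) → ℂ) : ℝ :=
  sSup {x : ℝ | ∃ w : Fin n → ℂ, pNorm p w < 1 ∧ x = ‖mhEval n m a w‖}

variable [Fact (1 ≤ p)]

lemma pNorm_eq_norm_toLp (z : Fin n → ℂ) : pNorm p z = ‖WithLp.toLp p z‖ := by
  unfold pNorm
  split_ifs with hp
  · subst hp
    rw [PiLp.norm_eq_ciSup]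
  · rw [PiLp.norm_eq_sum (ENNReal.toReal_pos (zero_lt_one.trans_le Fact.out).ne' hp)]

lemma pNorm_nonneg (z : Fin n → ℂ) : 0 ≤ pNorm p z := by
  rw [pNorm_eq_norm_toLp]
  exact norm_nonneg _

lemma pNorm_zero : pNorm p (0 : Fin n → ℂ) = 0 := by
  rw [pNorm_eq_norm_toLp, WithLp.toLp_zero, norm_zero]

lemma pNorm_add_le (z w : Fin n → ℂ) : pNorm p (z + w) ≤ pNorm p z + pNorm p w := by
  simp only [pNorm_eq_norm_toLp, WithLp.toLp_add]
  exact norm_add_le _ _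

lemma pNorm_smul (t : ℂ) (z : Fin n → ℂ) : pNorm p (t • z) = ‖t‖ * pNorm p z := by
  rw [pNorm_eq_norm_toLp, pNorm_eq_norm_toLp, WithLp.toLp_smul, norm_smul]

lemma norm_le_pNorm (z : Fin n → ℂ) (i : Fin n) : ‖z i‖ ≤ pNorm p z := by
  rw [pNorm_eq_norm_toLp]
  exact PiLp.norm_apply_le (WithLp.toLp p z) i

lemma bddAbove_norm_mhEval (a : (Fin n → ℕ) → ℂ) :
    BddAbove {x : ℝ | ∃ w : Fin n → ℂ, pNorm p w < 1 ∧ x = ‖mhEval n m a w‖} := by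
  refine ⟨∑ α ∈ antidiagonalTuple n m, ‖a α‖, ?_⟩
  rintro _ ⟨w, hw, rfl⟩
  refine (norm_mhEval_le_absEval a w).trans (sum_le_sum fun α _ => ?_)
  exact mul_le_of_le_one_right (norm_nonneg _) <| prod_le_one (fun _ _ => by positivity)
    fun i _ => pow_le_one₀ (norm_nonneg _) ((norm_le_pNorm w i).trans hw.le)

lemma norm_mhEval_le_polyNorm (a : (Fin n → ℕ) → ℂ) {z : Fin n → ℂ} (hz : pNorm p z < 1) :
    ‖mhEval n m a z‖ ≤ polyNorm p m a :=
  le_csSup (bddAbove_norm_mhEval a) ⟨z, hz, rfl⟩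

lemma polyNorm_nonneg (a : (Fin n → ℕ) → ℂ) : 0 ≤ polyNorm p m a :=
  (norm_nonneg _).trans (norm_mhEval_le_polyNorm a (pNorm_zero.trans_lt one_pos))

lemma polyNorm_le {a : (Fin n → ℕ) → ℂ} {M : ℝ}
    (h : ∀ z : Fin n → ℂ, pNorm p z < 1 → ‖mhEval n m a z‖ ≤ M) : polyNorm p m a ≤ M := by
  refine csSup_le ⟨_, 0, pNorm_zero.trans_lt one_pos, rfl⟩ ?_
  rintro _ ⟨w, hw, rfl⟩
  exact h w hw

lemma norm_mhEval_le_polyNorm_mul_pow (a : (Fin n → ℕ) → ℂ) (z : Fin n → ℂ) :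
    ‖mhEval n m a z‖ ≤ polyNorm p m a * pNorm p z ^ m := by
  have hlarger : ∀ r : ℝ, pNorm p z < r → ‖mhEval n m a z‖ ≤ polyNorm p m a * r ^ m := by
    intro r hr
    have hr0 : 0 < r := (pNorm_nonneg z).trans_lt hr
    have hball : pNorm p (((r⁻¹ : ℝ) : ℂ) • z) < 1 := by
      rw [pNorm_smul, Complex.norm_of_nonneg (inv_nonneg.2 hr0.le), inv_mul_lt_iff₀ hr0, mul_one]
      exact hr
    have h := norm_mhEval_le_polyNorm (m := m) a hball
    rwa [mhEval_smul, norm_mul, norm_pow, Complex.norm_of_nonneg (inv_nonneg.2 hr0.le), inv_pow,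
      inv_mul_le_iff₀' (by positivity)] at h
  have hlim : Filter.Tendsto (fun r : ℝ => polyNorm p m a * r ^ m)
      (nhdsWithin (pNorm p z) (Set.Ioi (pNorm p z))) (nhds (polyNorm p m a * pNorm p z ^ m)) :=
    (Continuous.tendsto (by fun_prop) _).mono_left nhdsWithin_le_nhds
  exact ge_of_tendsto hlim (eventually_nhdsWithin_of_forall hlarger)

end Norm

section Derivatives

variable {n k : ℕ}

/-- The coefficients of the `i`-th partial derivative of the polynomial with coefficients `a`. -/
noncomputable def partialCoeff (a : (Fin n → ℕ) → ℂ) (i : Fin n) (β : Fin n → ℕ) : ℂ :=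
  (β i + 1) * a (β + Pi.single i 1)

lemma norm_partialCoeff (a : (Fin n → ℕ) → ℂ) (i : Fin n) (β : Fin n → ℕ) :
    ‖partialCoeff a i β‖ = (β i + 1) * ‖a (β + Pi.single i 1)‖ := by
  rw [partialCoeff, norm_mul, ← Nat.cast_add_one, Complex.norm_natCast, Nat.cast_add_one]

lemma prod_pow_add_single {M : Type*} [CommMonoid M] (u : Fin n → M) (β : Fin n → ℕ)
    (i : Fin n) :
    ∏ j, u j ^ (β + Pi.single i 1 : Fin n → ℕ) j = u i * ∏ j, u j ^ β j := by
  simp only [Pi.add_apply, pow_add, prod_mul_distrib, Pi.single_apply, pow_ite, pow_one, pow_zero,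
    prod_ite_eq', mem_univ, if_true]
  exact mul_comm _ _

lemma mhEval_partialCoeff (a : (Fin n → ℕ) → ℂ) (i : Fin n) (z : Fin n → ℂ) :
    mhEval n k (partialCoeff a i) z = ∑ α ∈ antidiagonalTuple n (k + 1),
      a α * (α i * z i ^ (α i - 1) * ∏ j ∈ univ.erase i, z j ^ α j) := by
  have hshift := sum_antidiagonalTuple_succ_mul k i
    fun α => a α * (z i ^ (α i - 1) * ∏ j ∈ univ.erase i, z j ^ α j)
  calc mhEval n k (partialCoeff a i) z
      = ∑ β ∈ antidiagonalTuple n k, ((β i : ℂ) + 1) * (a (β + Pi.single i 1) *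
          (z i ^ β i * ∏ j ∈ univ.erase i, z j ^ β j)) := by
        refine sum_congr rfl fun β _ => ?_
        rw [mul_prod_erase univ (fun j => z j ^ β j) (mem_univ i), partialCoeff, mul_assoc]
    _ = ∑ α ∈ antidiagonalTuple n (k + 1),
          (α i : ℂ) * (a α * (z i ^ (α i - 1) * ∏ j ∈ univ.erase i, z j ^ α j)) := by
        rw [hshift]
        refine sum_congr rfl fun β _ => ?_
        have hrest : ∏ j ∈ univ.erase i, z j ^ (β + Pi.single i 1 : Fin n → ℕ) j =
            ∏ j ∈ univ.erase i, z j ^ β j := prod_congr rfl fun j hj => by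
          rw [Pi.add_apply, Pi.single_eq_of_ne (ne_of_mem_erase hj), add_zero]
        rw [hrest, Pi.add_apply, Pi.single_eq_same, Nat.add_sub_cancel]
    _ = _ := sum_congr rfl fun α _ => by ring

lemma hasDerivAt_mhEval_add_smul (a : (Fin n → ℕ) → ℂ) (z w : Fin n → ℂ) :
    HasDerivAt (fun t : ℂ => mhEval n (k + 1) a (z + t • w))
      (∑ i, w i * mhEval n k (partialCoeff a i) z) 0 := by
  have hcoord : ∀ (α : Fin n → ℕ) (i : Fin n), HasDerivAt (fun t : ℂ => (z i + t * w i) ^ α i)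
      (α i * z i ^ (α i - 1) * w i) 0 := fun α i => by
    simpa using (((hasDerivAt_id (0 : ℂ)).mul_const (w i)).const_add (z i)).fun_pow (α i)
  have hterm : ∀ α : Fin n → ℕ, HasDerivAt (fun t : ℂ => a α * ∏ i, (z i + t * w i) ^ α i)
      (a α * ∑ i, (∏ j ∈ univ.erase i, z j ^ α j) * (α i * z i ^ (α i - 1) * w i)) 0 := fun α => by
    simpa using (HasDerivAt.fun_finsetProd fun i _ => hcoord α i).const_mul (a α)
  refine (HasDerivAt.fun_sum fun α _ => hterm α).congr_deriv ?_
  simp only [mhEval_partialCoeff, mul_sum]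
  rw [sum_comm]
  exact sum_congr rfl fun i _ => sum_congr rfl fun α _ => by ring

lemma add_one_mul_absEval_succ (a : (Fin n → ℕ) → ℂ) (u : Fin n → ℂ) :
    (k + 1) * absEval (k + 1) a u = ∑ i, ‖u i‖ * absEval k (partialCoeff a i) u := by
  calc (k + 1) * absEval (k + 1) a u
      = ∑ α ∈ antidiagonalTuple n (k + 1), ∑ i, (α i : ℝ) * (‖a α‖ * ∏ j, ‖u j‖ ^ α j) := by
        rw [absEval, mul_sum]
        refine sum_congr rfl fun α hα => ?_
        rw [← sum_mul, ← Nat.cast_sum, Nat.mem_antidiagonalTuple.1 hα, Nat.cast_add_one]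
    _ = ∑ i, ∑ β ∈ antidiagonalTuple n k, ((β i : ℝ) + 1) *
          (‖a (β + Pi.single i 1)‖ * ∏ j, ‖u j‖ ^ (β + Pi.single i 1 : Fin n → ℕ) j) := by
        rw [sum_comm]
        exact sum_congr rfl fun i _ => sum_antidiagonalTuple_succ_mul k i _
    _ = ∑ i, ‖u i‖ * absEval k (partialCoeff a i) u := by
        simp only [absEval, mul_sum, prod_pow_add_single, norm_partialCoeff]
        exact sum_congr rfl fun i _ => sum_congr rfl fun β _ => by ring

lemma one_add_inv_pow_le_exp_one (k : ℕ) : (1 + ((k : ℝ) + 1)⁻¹) ^ (k + 1) ≤ Real.exp 1 := by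
  calc (1 + ((k : ℝ) + 1)⁻¹) ^ (k + 1)
      ≤ Real.exp ((k : ℝ) + 1)⁻¹ ^ (k + 1) := by
        gcongr
        rw [add_comm]
        exact Real.add_one_le_exp _
    _ = Real.exp 1 := by
        rw [← Real.exp_nat_mul, Nat.cast_add_one, mul_inv_cancel₀ (by positivity)]

variable {p : ℝ≥0∞} [Fact (1 ≤ p)]

/-- Cauchy's estimate on the circle of radius `1 / (k + 1)` around `z` in the direction `w`. -/
lemma norm_sum_mul_mhEval_partialCoeff_le (a : (Fin n → ℕ) → ℂ) {z w : Fin n → ℂ}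
    (hz : pNorm p z ≤ 1) (hw : pNorm p w ≤ 1) :
    ‖∑ i, w i * mhEval n k (partialCoeff a i) z‖ ≤
      (k + 1) * (Real.exp 1 * polyNorm p (k + 1) a) := by
  have hdiff : Differentiable ℂ fun t : ℂ => mhEval n (k + 1) a (z + t • w) := by
    simp only [mhEval, Pi.add_apply, Pi.smul_apply, smul_eq_mul]
    fun_prop
  have hcircle : ∀ t ∈ Metric.sphere (0 : ℂ) ((k : ℝ) + 1)⁻¹,
      ‖mhEval n (k + 1) a (z + t • w)‖ ≤ Real.exp 1 * polyNorm p (k + 1) a := fun t ht => by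
    have hnorm : pNorm p (z + t • w) ≤ 1 + ((k : ℝ) + 1)⁻¹ := by
      refine (pNorm_add_le _ _).trans (add_le_add hz ?_)
      rw [pNorm_smul, mem_sphere_zero_iff_norm.1 ht]
      exact mul_le_of_le_one_right (by positivity) hw
    calc ‖mhEval n (k + 1) a (z + t • w)‖
        ≤ polyNorm p (k + 1) a * pNorm p (z + t • w) ^ (k + 1) :=
          norm_mhEval_le_polyNorm_mul_pow _ _
      _ ≤ polyNorm p (k + 1) a * (1 + ((k : ℝ) + 1)⁻¹) ^ (k + 1) := by
          gcongr
          exacts [polyNorm_nonneg a, pNorm_nonneg _]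
      _ ≤ polyNorm p (k + 1) a * Real.exp 1 := by
          gcongr
          exacts [polyNorm_nonneg a, one_add_inv_pow_le_exp_one k]
      _ = Real.exp 1 * polyNorm p (k + 1) a := mul_comm _ _
  rw [← (hasDerivAt_mhEval_add_smul a z w).deriv]
  refine (Complex.norm_deriv_le_of_forall_mem_sphere_norm_le (by positivity) hdiff.diffContOnCl
    hcircle).trans_eq ?_
  rw [div_inv_eq_mul, mul_comm]

lemma exists_norm_eq_and_mul_eq (w c : Fin n → ℂ) :
    ∃ v : Fin n → ℂ, (∀ i, ‖v i‖ = ‖w i‖) ∧ ∀ i, v i * c i = ((‖w i‖ * ‖c i‖ : ℝ) : ℂ) := by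
  choose φ hφ hφc using fun i => Complex.exists_norm_eq_mul_self (c i)
  refine ⟨fun i => ‖w i‖ * φ i, fun i => by simp [hφ], fun i => ?_⟩
  rw [mul_assoc, ← hφc, Complex.ofReal_mul]

lemma sum_norm_mul_norm_mhEval_partialCoeff_le (a : (Fin n → ℕ) → ℂ) {z w : Fin n → ℂ}
    (hz : pNorm p z ≤ 1) (hw : pNorm p w ≤ 1) :
    ∑ i, ‖w i‖ * ‖mhEval n k (partialCoeff a i) z‖ ≤
      (k + 1) * (Real.exp 1 * polyNorm p (k + 1) a) := by
  obtain ⟨v, hv, hvD⟩ := exists_norm_eq_and_mul_eq w fun i => mhEval n k (partialCoeff a i) z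
  have h := norm_sum_mul_mhEval_partialCoeff_le (k := k) a hz
    ((pNorm_mono fun i => (hv i).le).trans hw)
  simp only [hvD, ← Complex.ofReal_sum] at h
  rwa [Complex.norm_of_nonneg (by positivity)] at h

lemma sum_norm_mul_norm_partialCoeff_mul_le (a : (Fin n → ℕ) → ℂ) {w : Fin n → ℂ}
    (hw : pNorm p w ≤ 1) {r : Fin n → ℝ} (hr : ∀ i, 0 ≤ r i)
    (hr1 : ∀ z : Fin n → ℂ, (∀ i, ‖z i‖ = r i) → pNorm p z ≤ 1) {β : Fin n → ℕ}
    (hβ : β ∈ antidiagonalTuple n k) :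
    (∑ i, ‖w i‖ * ‖partialCoeff a i β‖) * ∏ i, r i ^ β i ≤
      (k + 1) * (Real.exp 1 * polyNorm p (k + 1) a) := by
  obtain ⟨v, hv, hvβ⟩ := exists_norm_eq_and_mul_eq w fun i => partialCoeff a i β
  have hcauchy := norm_coeff_mul_le_of_forall_norm_mhEval_le (k := k)
    (c := fun γ => ∑ i, v i * partialCoeff a i γ) hr
    (M := (k + 1) * (Real.exp 1 * polyNorm p (k + 1) a)) (fun z hz => ?_) hβ
  · simp only [hvβ, ← Complex.ofReal_sum] at hcauchy
    rwa [Complex.norm_of_nonneg (by positivity)] at hcauchy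
  · have hlinear : mhEval n k (fun γ => ∑ i, v i * partialCoeff a i γ) z =
        ∑ i, v i * mhEval n k (partialCoeff a i) z := by
      simp only [mhEval, mul_sum, sum_mul, mul_assoc]
      exact sum_comm
    rw [hlinear]
    exact norm_sum_mul_mhEval_partialCoeff_le a (hr1 z hz)
      ((pNorm_mono fun i => (hv i).le).trans hw)

end Derivatives

section UpperBoundsForAbsEval

variable {n k : ℕ}

lemma pow_mul_absEval_le_sum_torusPoint {N : ℕ} [NeZero N] (hN : k + k < N)
    (b : (Fin n → ℕ) → ℂ) (u : Fin n → ℂ) :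
    (N : ℝ) ^ n * absEval k b u ≤ 2 ^ k * √(#(antidiagonalTuple n k)) *
      ∑ θ : Fin n → ZMod N, ‖mhEval n k b (u * torusPoint θ)‖ := by
  set c : (Fin n → ℕ) → ℂ := fun α => b α * ∏ i, u i ^ α i
  have hCauchySchwarz : absEval k b u ≤
      √(#(antidiagonalTuple n k)) * √(∑ α ∈ antidiagonalTuple n k, ‖c α‖ ^ 2) := by
    rw [← Real.sqrt_mul (by positivity)]
    refine Real.le_sqrt_of_sq_le ?_
    simpa only [absEval, c, norm_mul, norm_prod, norm_pow] using
      sq_sum_le_card_mul_sum_sq (s := antidiagonalTuple n k) (f := fun α => ‖c α‖)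
  calc (N : ℝ) ^ n * absEval k b u
      ≤ N ^ n * (√(#(antidiagonalTuple n k)) * √(∑ α ∈ antidiagonalTuple n k, ‖c α‖ ^ 2)) := by
        gcongr
    _ = √(#(antidiagonalTuple n k)) * (N ^ n * √(∑ α ∈ antidiagonalTuple n k, ‖c α‖ ^ 2)) := by
        ring
    _ ≤ √(#(antidiagonalTuple n k)) *
          (2 ^ k * ∑ θ : Fin n → ZMod N, ‖mhEval n k c (torusPoint θ)‖) := by
        gcongr _ * ?_
        exact sqrt_sum_norm_sq_le_sum_norm_mhEval_torusPoint hN c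
    _ = 2 ^ k * √(#(antidiagonalTuple n k)) *
          ∑ θ : Fin n → ZMod N, ‖mhEval n k b (u * torusPoint θ)‖ := by
        simp only [mhEval_mul_right, c]
        ring

lemma sum_multinomial_mul_prod_pow {R : Type*} [CommSemiring R] (m : ℕ) (f : Fin n → R) :
    ∑ α ∈ antidiagonalTuple n m, (Nat.multinomial univ α : R) * ∏ i, f i ^ α i =
      (∑ i, f i) ^ m := by
  rw [sum_pow_eq_sum_piAntidiag, piAntidiag_univ_fin_eq_antidiagonalTuple]

lemma one_le_exp_mul_multinomial_mul_prod {β : Fin n → ℕ} (hβ : β ∈ antidiagonalTuple n k) :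
    1 ≤ (∏ i, ((β i : ℝ) / k) ^ β i) * (Real.exp k * Nat.multinomial univ β) := by
  have hsum := Nat.mem_antidiagonalTuple.1 hβ
  have hspec : (∏ i, ((β i).factorial : ℝ)) * Nat.multinomial univ β = k.factorial := by
    exact_mod_cast hsum ▸ Nat.multinomial_spec univ β
  have hexp : (k : ℝ) ^ k ≤ Real.exp k * k.factorial :=
    (div_le_iff₀ (by positivity)).1 (Real.pow_div_factorial_le_exp k (by positivity) k)
  have hpos : (0 : ℝ) < (k : ℝ) ^ k := by exact_mod_cast Nat.pow_self_pos
  have hprod : ∏ i, ((β i : ℝ) / k) ^ β i = (∏ i, (β i : ℝ) ^ β i) / (k : ℝ) ^ k := by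
    simp only [div_pow, prod_div_distrib, prod_pow_eq_pow_sum, hsum]
  rw [hprod, div_mul_eq_mul_div, le_div_iff₀ hpos, one_mul]
  calc (k : ℝ) ^ k
      ≤ (∏ i, ((β i).factorial : ℝ)) * (Real.exp k * Nat.multinomial univ β) := by
        rw [mul_left_comm, hspec]
        exact hexp
    _ ≤ (∏ i, (β i : ℝ) ^ β i) * (Real.exp k * Nat.multinomial univ β) := by
        gcongr with i
        exact_mod_cast Nat.factorial_le_pow (β i)

lemma prod_pow_rpow {x : Fin n → ℝ} (hx : ∀ i, 0 ≤ x i) (α : Fin n → ℕ) (q : ℝ) :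
    (∏ i, x i ^ α i) ^ q = ∏ i, (x i ^ q) ^ α i := by
  rw [← Real.finsetProd_rpow _ _ fun i _ => pow_nonneg (hx i) _]
  exact prod_congr rfl fun i _ => (Real.rpow_pow_comm (hx i) _ _).symm

lemma sum_le_card_rpow_of_sum_rpow_le_one {τ : Type*} {s : Finset τ} {f : τ → ℝ}
    (hf : ∀ t ∈ s, 0 ≤ f t) {q : ℝ} (hq : 1 ≤ q) (h : ∑ t ∈ s, f t ^ q ≤ 1) :
    ∑ t ∈ s, f t ≤ (#s : ℝ) ^ (1 - 1 / q) := by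
  have hq0 : 0 < q := zero_lt_one.trans_le hq
  have hsum : 0 ≤ ∑ t ∈ s, f t := sum_nonneg hf
  rw [← Real.rpow_le_rpow_iff hsum (by positivity) hq0, ← Real.rpow_mul (by positivity),
    sub_mul, one_mul, one_div_mul_cancel hq0.ne']
  exact (Real.rpow_sum_le_const_mul_sum_rpow_of_nonneg s hq hf).trans
    (mul_le_of_le_one_right (by positivity) h)

variable {p : ℝ≥0∞} [Fact (1 ≤ p)]

/-- Averaging the derivative estimate over the torus through `u` and replacing the `ℓ_1`-norm of the
coefficients by their `ℓ_2`-norm costs only the square root of their number, since the `ℓ_2`-norm is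
controlled by the average of the partial derivatives in absolute value. -/
lemma absEval_succ_le_sqrt_card (a : (Fin n → ℕ) → ℂ) {u : Fin n → ℂ} (hu : pNorm p u ≤ 1) :
    absEval (k + 1) a u ≤
      2 ^ k * Real.exp 1 * √(#(antidiagonalTuple n k)) * polyNorm p (k + 1) a := by
  set N := k + k + 1
  set A := √(#(antidiagonalTuple n k))
  have hpos : (0 : ℝ) < (N : ℝ) ^ n * (k + 1) := by positivity
  refine le_of_mul_le_mul_left ?_ hpos
  calc (N : ℝ) ^ n * (k + 1) * absEval (k + 1) a u
      = ∑ i, ‖u i‖ * (N ^ n * absEval k (partialCoeff a i) u) := by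
        rw [mul_assoc, add_one_mul_absEval_succ, mul_sum]
        exact sum_congr rfl fun i _ => mul_left_comm _ _ _
    _ ≤ ∑ i, ‖u i‖ * (2 ^ k * A *
          ∑ θ : Fin n → ZMod N, ‖mhEval n k (partialCoeff a i) (u * torusPoint θ)‖) := by
        gcongr ∑ i, _ * ?_ with i
        exact pow_mul_absEval_le_sum_torusPoint (Nat.lt_succ_self _) _ u
    _ = 2 ^ k * A * ∑ θ : Fin n → ZMod N,
          ∑ i, ‖u i‖ * ‖mhEval n k (partialCoeff a i) (u * torusPoint θ)‖ := by
        rw [sum_comm, mul_sum]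
        exact sum_congr rfl fun i _ => by rw [← mul_sum]; ring
    _ ≤ 2 ^ k * A * ∑ _θ : Fin n → ZMod N, (k + 1) * (Real.exp 1 * polyNorm p (k + 1) a) := by
        gcongr with θ
        refine sum_norm_mul_norm_mhEval_partialCoeff_le a ((pNorm_mono fun i => ?_).trans hu) hu
        rw [Pi.mul_apply, norm_mul, norm_torusPoint, mul_one]
    _ = (N : ℝ) ^ n * (k + 1) * (2 ^ k * Real.exp 1 * A * polyNorm p (k + 1) a) := by
        simp only [sum_const, card_univ, Fintype.card_pi_const, ZMod.card, nsmul_eq_mul,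
          Nat.cast_pow]
        ring

lemma one_le_toReal (hp : p ≠ ∞) : 1 ≤ p.toReal := by
  simpa using ENNReal.toReal_mono hp (Fact.out : 1 ≤ p)

lemma pNorm_le_one_iff (hp : p ≠ ∞) (z : Fin n → ℂ) :
    pNorm p z ≤ 1 ↔ ∑ i, ‖z i‖ ^ p.toReal ≤ 1 := by
  have hq : 0 < p.toReal := zero_lt_one.trans_le (one_le_toReal hp)
  have hsum : 0 ≤ ∑ i, ‖z i‖ ^ p.toReal := sum_nonneg fun _ _ => by positivity
  rw [pNorm, if_neg hp, ← Real.rpow_le_rpow_iff hsum zero_le_one (one_div_pos.2 hq),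
    Real.one_rpow]

/-- Cauchy's estimate with the radii `(β i / k) ^ (1 / p)`, which maximise the monomial `z ^ β` on
the unit sphere of `ℓ_p^n`. -/
lemma sum_norm_mul_norm_partialCoeff_le_multinomial (hp : p ≠ ∞) (a : (Fin n → ℕ) → ℂ)
    {w : Fin n → ℂ} (hw : pNorm p w ≤ 1) {β : Fin n → ℕ} (hβ : β ∈ antidiagonalTuple n k) :
    ∑ i, ‖w i‖ * ‖partialCoeff a i β‖ ≤ (k + 1) * (Real.exp 1 * polyNorm p (k + 1) a) *
      (Real.exp k * Nat.multinomial univ β) ^ (1 / p.toReal) := by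
  have hq : p.toReal ≠ 0 := (zero_lt_one.trans_le (one_le_toReal hp)).ne'
  set D := ∑ i, ‖w i‖ * ‖partialCoeff a i β‖
  set X := ∏ i, ((β i : ℝ) / k) ^ β i
  set Y := Real.exp k * Nat.multinomial univ β
  set r : Fin n → ℝ := fun i => ((β i : ℝ) / k) ^ (1 / p.toReal)
  have hD : 0 ≤ D := sum_nonneg fun _ _ => by positivity
  have hX : 0 ≤ X := prod_nonneg fun _ _ => by positivity
  have hsphere : ∀ z : Fin n → ℂ, (∀ i, ‖z i‖ = r i) → pNorm p z ≤ 1 := fun z hz => by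
    have hpow : ∀ i, ‖z i‖ ^ p.toReal = (β i : ℝ) / k := fun i => by
      rw [hz, ← Real.rpow_mul (by positivity), one_div_mul_cancel hq, Real.rpow_one]
    simp only [pNorm_le_one_iff hp, hpow, ← sum_div, ← Nat.cast_sum,
      Nat.mem_antidiagonalTuple.1 hβ, div_self_le_one]
  have hprod : ∏ i, r i ^ β i = X ^ (1 / p.toReal) :=
    (prod_pow_rpow (fun _ => by positivity) _ _).symm
  have hcauchy : D * X ^ (1 / p.toReal) ≤ (k + 1) * (Real.exp 1 * polyNorm p (k + 1) a) :=
    hprod ▸ sum_norm_mul_norm_partialCoeff_mul_le a hw (fun _ => by positivity) hsphere hβ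
  calc D ≤ D * (X * Y) ^ (1 / p.toReal) :=
        le_mul_of_one_le_right hD
          (Real.one_le_rpow (one_le_exp_mul_multinomial_mul_prod hβ) (by positivity))
    _ = D * X ^ (1 / p.toReal) * Y ^ (1 / p.toReal) := by
        rw [Real.mul_rpow hX (by positivity), mul_assoc]
    _ ≤ _ := by gcongr

lemma sum_multinomial_mul_prod_pow_rpow_le_one (hp : p ≠ ∞) {u : Fin n → ℂ}
    (hu : pNorm p u ≤ 1) :
    ∑ β ∈ antidiagonalTuple n k,
      (Nat.multinomial univ β : ℝ) * (∏ i, ‖u i‖ ^ β i) ^ p.toReal ≤ 1 := by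
  simp only [prod_pow_rpow fun i => norm_nonneg (u i), sum_multinomial_mul_prod_pow]
  exact pow_le_one₀ (by positivity) ((pNorm_le_one_iff hp u).1 hu)

lemma sum_multinomial_rpow_mul_prod_pow_le (hp : p ≠ ∞) {u : Fin n → ℂ} (hu : pNorm p u ≤ 1) :
    ∑ β ∈ antidiagonalTuple n k,
        (Nat.multinomial univ β : ℝ) ^ (1 / p.toReal) * ∏ i, ‖u i‖ ^ β i ≤
      (#(antidiagonalTuple n k) : ℝ) ^ (1 - 1 / p.toReal) := by
  have hq : p.toReal ≠ 0 := (zero_lt_one.trans_le (one_le_toReal hp)).ne'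
  refine sum_le_card_rpow_of_sum_rpow_le_one (fun _ _ => by positivity) (one_le_toReal hp) ?_
  refine (sum_congr rfl fun β _ => ?_).trans_le (sum_multinomial_mul_prod_pow_rpow_le_one hp hu)
  rw [Real.mul_rpow (by positivity) (by positivity), ← Real.rpow_mul (by positivity),
    one_div_mul_cancel hq, Real.rpow_one]

lemma absEval_succ_le_card_rpow (hp : p ≠ ∞) (a : (Fin n → ℕ) → ℂ) {u : Fin n → ℂ}
    (hu : pNorm p u ≤ 1) :
    absEval (k + 1) a u ≤ Real.exp k * Real.exp 1 *
      (#(antidiagonalTuple n k) : ℝ) ^ (1 - 1 / p.toReal) * polyNorm p (k + 1) a := by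
  have hq := one_le_toReal hp
  have hM : 0 ≤ polyNorm p (k + 1) a := polyNorm_nonneg a
  have hexp : Real.exp k ^ (1 / p.toReal) ≤ Real.exp k :=
    Real.rpow_le_self_of_one_le (Real.one_le_exp k.cast_nonneg)
      ((div_le_one (zero_lt_one.trans_le hq)).2 hq)
  have hpos : (0 : ℝ) < k + 1 := by positivity
  refine le_of_mul_le_mul_left ?_ hpos
  calc (k + 1) * absEval (k + 1) a u
      = ∑ β ∈ antidiagonalTuple n k,
          (∑ i, ‖u i‖ * ‖partialCoeff a i β‖) * ∏ i, ‖u i‖ ^ β i := by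
        rw [add_one_mul_absEval_succ]
        simp only [absEval, mul_sum, sum_mul, mul_assoc]
        exact sum_comm
    _ ≤ ∑ β ∈ antidiagonalTuple n k, (k + 1) * (Real.exp 1 * polyNorm p (k + 1) a) *
          (Real.exp k * Nat.multinomial univ β) ^ (1 / p.toReal) * ∏ i, ‖u i‖ ^ β i := by
        gcongr with β hβ
        exact sum_norm_mul_norm_partialCoeff_le_multinomial hp a hu hβ
    _ = (k + 1) * (Real.exp 1 * polyNorm p (k + 1) a) * Real.exp k ^ (1 / p.toReal) *
          ∑ β ∈ antidiagonalTuple n k,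
            (Nat.multinomial univ β : ℝ) ^ (1 / p.toReal) * ∏ i, ‖u i‖ ^ β i := by
        rw [mul_sum]
        refine sum_congr rfl fun β _ => ?_
        rw [Real.mul_rpow (by positivity) (by positivity)]
        ring
    _ ≤ (k + 1) * (Real.exp 1 * polyNorm p (k + 1) a) * Real.exp k *
          (#(antidiagonalTuple n k) : ℝ) ^ (1 - 1 / p.toReal) := by
        gcongr
        exact sum_multinomial_rpow_mul_prod_pow_le hp hu
    _ = _ := by ring

lemma absEval_succ_le (a : (Fin n → ℕ) → ℂ) {u : Fin n → ℂ} (hu : pNorm p u ≤ 1) :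
    absEval (k + 1) a u ≤ Real.exp (k + 1) *
      (#(antidiagonalTuple n k) : ℝ) ^ (1 - 1 / (min p 2).toReal) * polyNorm p (k + 1) a := by
  rw [Real.exp_add]
  rcases le_total p 2 with h | h
  · rw [min_eq_left h]
    exact absEval_succ_le_card_rpow (ne_top_of_le_ne_top ENNReal.ofNat_ne_top h) a hu
  · have hexponent : 1 - 1 / (2 : ℝ≥0∞).toReal = 1 / 2 := by norm_num
    rw [min_eq_right h, hexponent, ← Real.sqrt_eq_rpow]
    refine (absEval_succ_le_sqrt_card a hu).trans ?_
    gcongr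
    · exact polyNorm_nonneg a
    · rw [← mul_one (k : ℝ), Real.exp_nat_mul]
      gcongr
      exact Real.exp_one_gt_two.le

end UpperBoundsForAbsEval

section UnconditionalConstant

variable {n m k : ℕ} {p : ℝ≥0∞}

lemma chiMon_nonneg : 0 ≤ chiMon p m n :=
  Real.sInf_nonneg fun _ hc => hc.1

variable [Fact (1 ≤ p)]

lemma norm_mhEval_mul_le {ε : (Fin n → ℕ) → ℂ} (hε : ∀ α, ‖ε α‖ ≤ 1) (a : (Fin n → ℕ) → ℂ)
    {z : Fin n → ℂ} (hz : pNorm p z ≤ 1) :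
    ‖mhEval n (k + 1) (fun α => ε α * a α) z‖ ≤ Real.exp (k + 1) *
      (#(antidiagonalTuple n k) : ℝ) ^ (1 - 1 / (min p 2).toReal) * polyNorm p (k + 1) a :=
  (norm_mhEval_le_absEval _ z).trans ((absEval_mul_le hε z).trans (absEval_succ_le a hz))

lemma chiMon_succ_le : chiMon p (k + 1) n ≤
    Real.exp (k + 1) * (#(antidiagonalTuple n k) : ℝ) ^ (1 - 1 / (min p 2).toReal) :=
  csInf_le ⟨0, fun _ hc => hc.1⟩
    ⟨by positivity, fun a _ hε _ hz => norm_mhEval_mul_le hε a hz.le⟩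

lemma norm_mhEval_mul_le_chiMon_mul_polyNorm (hm : m ≠ 0) {ε : (Fin n → ℕ) → ℂ}
    (hε : ∀ α, ‖ε α‖ ≤ 1) (a : (Fin n → ℕ) → ℂ) {z : Fin n → ℂ} (hz : pNorm p z < 1) :
    ‖mhEval n m (fun α => ε α * a α) z‖ ≤ chiMon p m n * polyNorm p m a := by
  obtain ⟨k, rfl⟩ := Nat.exists_eq_succ_of_ne_zero hm
  rcases (polyNorm_nonneg (p := p) (m := k + 1) a).eq_or_lt with hzero | hpos
  · exact (norm_mhEval_mul_le hε a hz.le).trans_eq (by rw [← hzero, mul_zero, mul_zero])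
  · rw [← div_le_iff₀ hpos]
    refine le_csInf ⟨_, by positivity, fun a _ hε _ hz => norm_mhEval_mul_le hε a hz.le⟩ ?_
    exact fun c hc => (div_le_iff₀ hpos).2 (hc.2 a ε hε z hz)

lemma polyNorm_mul_le_chiMon_mul_polyNorm (hm : m ≠ 0) {ε : (Fin n → ℕ) → ℂ}
    (hε : ∀ α, ‖ε α‖ ≤ 1) (a : (Fin n → ℕ) → ℂ) :
    polyNorm p m (fun α => ε α * a α) ≤ chiMon p m n * polyNorm p m a :=
  polyNorm_le fun _ hz => norm_mhEval_mul_le_chiMon_mul_polyNorm hm hε a hz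

end UnconditionalConstant

section Counting

lemma card_antidiagonalTuple_eq_choose (n k : ℕ) :
    #(antidiagonalTuple n k) = (n + k - 1).choose k := by
  rw [← piAntidiag_univ_fin_eq_antidiagonalTuple, ← map_sym_eq_piAntidiag, card_map, sym_univ,
    card_univ, Sym.card_sym_eq_choose, Fintype.card_fin]

lemma card_antidiagonalTuple_le_choose (n k : ℕ) :
    #(antidiagonalTuple n k) ≤ (n + k).choose k := by
  rw [card_antidiagonalTuple_eq_choose]
  exact Nat.choose_le_choose k (Nat.sub_le _ _)

lemma one_le_div_log {x : ℝ} (hx : 1 < x) : 1 ≤ x / Real.log x := by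
  rw [one_le_div (Real.log_pos hx)]
  exact Real.log_le_self (zero_le_one.trans hx.le)

/-- For `k ≤ n` the exponent `k + 1` on the right exceeds by one the number of factors `n` on the
left; it is the exponential series that pays for the missing factor, via `log n ^ (k + 1) ≤
(k + 1)! * n`. -/
lemma card_antidiagonalTuple_le_pow {n : ℕ} (hn : 2 ≤ n) (k : ℕ) :
    (#(antidiagonalTuple n k) : ℝ) ≤ (4 * (n / Real.log n)) ^ (k + 1) := by
  have hn1 : (1 : ℝ) < n := by exact_mod_cast hn
  have hlog : 0 < Real.log n := Real.log_pos hn1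
  have hratio : 1 ≤ (n : ℝ) / Real.log n := one_le_div_log hn1
  refine (Nat.cast_le.2 (card_antidiagonalTuple_le_choose n k)).trans ?_
  rcases le_total n k with hnk | hkn
  · calc ((n + k).choose k : ℝ) ≤ 2 ^ (n + k) := by exact_mod_cast Nat.choose_le_two_pow _ _
      _ ≤ 2 ^ (k + k) := by gcongr; exact one_le_two
      _ = 4 ^ k := by rw [← two_mul, pow_mul]; norm_num
      _ ≤ (4 * (n / Real.log n)) ^ k := by gcongr; linarith
      _ ≤ (4 * (n / Real.log n)) ^ (k + 1) := pow_le_pow_right₀ (by linarith) k.le_succ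
  · have hexp : Real.log n ^ (k + 1) ≤ (k + 1).factorial * n := by
      have := Real.pow_div_factorial_le_exp (Real.log n) hlog.le (k + 1)
      rwa [Real.exp_log (by linarith), div_le_iff₀' (by positivity)] at this
    have hsucc : ((k + 1 : ℕ) : ℝ) ≤ 2 ^ k := by exact_mod_cast Nat.lt_two_pow_self
    rw [← mul_div_assoc, div_pow, le_div_iff₀ (by positivity)]
    calc ((n + k).choose k : ℝ) * Real.log n ^ (k + 1)
        ≤ ((n + k : ℕ) : ℝ) ^ k / k.factorial * ((k + 1).factorial * n) := by
          gcongr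
          exact Nat.choose_le_pow_div k (n + k)
      _ = ((n + k : ℕ) : ℝ) ^ k * (k + 1 : ℕ) * n := by
          rw [Nat.factorial_succ]
          push_cast
          field_simp
      _ ≤ (2 * n) ^ k * 2 ^ k * n := by
          gcongr
          exact_mod_cast (by lia : n + k ≤ 2 * n)
      _ = 4 ^ k * n ^ (k + 1) := by
          rw [← mul_pow, pow_succ, ← mul_assoc, ← mul_pow]
          ring
      _ ≤ (4 * n) ^ (k + 1) := by
          rw [mul_pow]
          gcongr
          · norm_num
          · exact k.le_succ

end Counting

section UpperBound

variable {p : ℝ≥0∞}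

lemma min_two_ne_top : min p 2 ≠ ∞ :=
  ne_top_of_le_ne_top ENNReal.ofNat_ne_top (min_le_right p 2)

variable [Fact (1 ≤ p)]

instance fact_one_le_min_two : Fact (1 ≤ min p 2) :=
  ⟨le_min Fact.out one_le_two⟩

lemma one_sub_one_div_toReal_nonneg (hp : p ≠ ∞) : 0 ≤ 1 - 1 / p.toReal :=
  sub_nonneg.2 ((div_le_one (zero_lt_one.trans_le (one_le_toReal hp))).2 (one_le_toReal hp))

lemma chiMon_rpow_one_div_le {n : ℕ} (hn : 2 ≤ n) {m : ℕ} (hm : m ≠ 0) :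
    chiMon p m n ^ (1 / (m : ℝ)) ≤
      4 * Real.exp 1 * ((n : ℝ) / Real.log n) ^ (1 - 1 / (min p 2).toReal) := by
  obtain ⟨k, rfl⟩ := Nat.exists_eq_succ_of_ne_zero hm
  set s := 1 - 1 / (min p 2).toReal
  have hratio : 1 ≤ (n : ℝ) / Real.log n := one_le_div_log (by exact_mod_cast hn)
  have hs : 0 ≤ s := one_sub_one_div_toReal_nonneg min_two_ne_top
  have hs1 : s ≤ 1 := sub_le_self _ (by positivity)
  rw [one_div, Real.rpow_inv_le_iff_of_pos chiMon_nonneg (by positivity) (by positivity),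
    Real.rpow_natCast]
  calc chiMon p (k + 1) n
      ≤ Real.exp (k + 1) * (#(antidiagonalTuple n k) : ℝ) ^ s := chiMon_succ_le
    _ ≤ Real.exp (k + 1) * ((4 * (n / Real.log n)) ^ (k + 1)) ^ s := by
        gcongr
        exact card_antidiagonalTuple_le_pow hn k
    _ = (Real.exp 1 * (4 ^ s * (n / Real.log n) ^ s)) ^ (k + 1) := by
        rw [← Real.rpow_pow_comm (by positivity), Real.mul_rpow (by positivity) (by positivity),
          mul_pow (Real.exp 1), ← Real.exp_nat_mul, mul_one, Nat.cast_succ]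
    _ ≤ (Real.exp 1 * (4 * (n / Real.log n) ^ s)) ^ (k + 1) := by
        gcongr
        exact Real.rpow_le_self_of_one_le (by norm_num) hs1
    _ = (4 * Real.exp 1 * (n / Real.log n) ^ s) ^ (k + 1) := by ring

end UpperBound

section RandomSigns

variable {ι τ : Type*} [Fintype ι] [Fintype τ]

lemma sum_exp_sum_units_mul_le [DecidableEq ι] (x : ι → ℝ) :
    ∑ ε : ι → ℤˣ, Real.exp (∑ i, (ε i : ℤ) * x i) ≤
      Fintype.card (ι → ℤˣ) * Real.exp ((∑ i, x i ^ 2) / 2) := by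
  calc ∑ ε : ι → ℤˣ, Real.exp (∑ i, (ε i : ℤ) * x i)
      = ∏ i, ∑ η : ℤˣ, Real.exp ((η : ℤ) * x i) := by
        simp only [Real.exp_sum, Fintype.prod_sum]
    _ = ∏ i, 2 * Real.cosh (x i) := by
        simp [UnitsInt.univ, Real.cosh_eq, mul_div_cancel₀]
    _ ≤ ∏ i, 2 * Real.exp (x i ^ 2 / 2) := by
        gcongr with i
        exact Real.cosh_le_exp_half_sq (x i)
    _ = Fintype.card (ι → ℤˣ) * Real.exp ((∑ i, x i ^ 2) / 2) := by
        simp [prod_mul_distrib, sum_div, Real.exp_sum]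

lemma exists_units_sum_exp_le (x : τ → ι → ℝ) (hx : ∀ t, ∑ i, x t i ^ 2 ≤ 1) :
    ∃ ε : ι → ℤˣ, ∑ t, Real.exp (∑ i, (ε i : ℤ) * x t i) ≤
      Fintype.card τ * Real.exp (1 / 2) := by
  classical
  obtain ⟨ε, -, hε⟩ := exists_le_of_sum_le (s := (univ : Finset (ι → ℤˣ))) univ_nonempty
    (f := fun ε => ∑ t, Real.exp (∑ i, (ε i : ℤ) * x t i))
    (g := fun _ => Fintype.card τ * Real.exp (1 / 2)) <| by
      rw [sum_comm]
      calc ∑ t, ∑ ε : ι → ℤˣ, Real.exp (∑ i, (ε i : ℤ) * x t i)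
          ≤ ∑ _t : τ, Fintype.card (ι → ℤˣ) * Real.exp (1 / 2) := by
            refine sum_le_sum fun t _ => (sum_exp_sum_units_mul_le (x t)).trans ?_
            gcongr
            exact hx t
        _ = ∑ _ε : ι → ℤˣ, Fintype.card τ * Real.exp (1 / 2) := by
            simp only [sum_const, card_univ, nsmul_eq_mul]
            ring
  exact ⟨ε, hε⟩

lemma exists_units_sum_mul_le {x : τ → ι → ℝ} {σ : ℝ} (hσ : 0 < σ)
    (hx : ∀ t, ∑ i, x t i ^ 2 ≤ σ ^ 2) :
    ∃ ε : ι → ℤˣ, ∀ t, ∑ i, (ε i : ℤ) * x t i ≤ σ * (Real.log (Fintype.card τ) + 1 / 2) := by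
  obtain ⟨ε, hε⟩ := exists_units_sum_exp_le (fun t i => x t i / σ) fun t => by
    simp only [div_pow, ← sum_div]
    exact div_le_one_of_le₀ (hx t) (by positivity)
  refine ⟨ε, fun t => ?_⟩
  have hcard : (Fintype.card τ : ℝ) ≠ 0 := by
    exact_mod_cast (Fintype.card_pos_iff.2 ⟨t⟩).ne'
  have hexp : Real.exp (∑ i, (ε i : ℤ) * (x t i / σ)) ≤ Fintype.card τ * Real.exp (1 / 2) :=
    (single_le_sum (f := fun t => Real.exp (∑ i, (ε i : ℤ) * (x t i / σ)))
      (fun _ _ => (Real.exp_pos _).le) (mem_univ t)).trans hε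
  have hlog := (Real.le_log_iff_exp_le (by positivity)).2 hexp
  rw [Real.log_mul hcard (Real.exp_ne_zero _), Real.log_exp] at hlog
  simp only [← mul_div_assoc, ← sum_div] at hlog
  exact (div_le_iff₀' hσ).1 hlog

lemma norm_le_two_mul_of_forall_I_pow_mul_re_le {w : ℂ} {L : ℝ}
    (h : ∀ j : Fin 4, (Complex.I ^ (j : ℕ) * w).re ≤ L) : ‖w‖ ≤ 2 * L := by
  have h0 := h 0
  have h1 := h 1
  have h2 := h 2
  have h3 := h 3
  simp only [Fin.isValue, Fin.coe_ofNat_eq_mod, Nat.zero_mod, pow_zero, one_mul, Nat.one_mod,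
    pow_one, Complex.mul_re, Complex.I_re, zero_mul, Complex.I_im, zero_sub, Nat.reduceMod,
    Complex.I_sq, neg_mul, Complex.neg_re, Nat.mod_succ, Complex.I_pow_three, neg_neg]
    at h0 h1 h2 h3
  rw [two_mul]
  exact (Complex.norm_le_abs_re_add_abs_im w).trans
    (add_le_add (abs_le.2 ⟨by linarith, h0⟩) (abs_le.2 ⟨by linarith, by linarith⟩))

lemma exists_units_norm_sum_mul_le {b : τ → ι → ℂ} {σ : ℝ} (hσ : 0 < σ)
    (hb : ∀ t, ∑ i, ‖b t i‖ ^ 2 ≤ σ ^ 2) :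
    ∃ ε : ι → ℤˣ, ∀ t, ‖∑ i, ((ε i : ℤ) : ℂ) * b t i‖ ≤
      2 * (σ * (Real.log (4 * Fintype.card τ) + 1 / 2)) := by
  obtain ⟨ε, hε⟩ := exists_units_sum_mul_le
    (x := fun (t : τ × Fin 4) i => (Complex.I ^ (t.2 : ℕ) * b t.1 i).re) hσ fun t => by
      refine le_trans ?_ (hb t.1)
      refine sum_le_sum fun i _ => sq_le_sq.2 ?_
      rw [abs_norm]
      refine (Complex.abs_re_le_norm _).trans_eq ?_
      rw [norm_mul, norm_pow, Complex.norm_I, one_pow, one_mul]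
  refine ⟨ε, fun t => norm_le_two_mul_of_forall_I_pow_mul_re_le fun j => ?_⟩
  have hre : (Complex.I ^ (j : ℕ) * ∑ i, ((ε i : ℤ) : ℂ) * b t i).re =
      ∑ i, (ε i : ℤ) * (Complex.I ^ (j : ℕ) * b t i).re := by
    rw [mul_sum, Complex.re_sum]
    refine sum_congr rfl fun i _ => ?_
    rw [mul_left_comm, ← Complex.ofReal_intCast, Complex.re_ofReal_mul]
  rw [hre]
  simpa [mul_comm] using hε (t, j)

end RandomSigns

section Net

/-- The cell containing `w` when the complex plane is divided into squares of side `1 / K`. -/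
noncomputable def gridCell (K : ℕ) (w : ℂ) : ℤ × ℤ :=
  (⌊K * w.re⌋, ⌊K * w.im⌋)

variable {K : ℕ}

lemma floor_mul_mem_Icc {x : ℝ} (hx : |x| ≤ 1) : ⌊K * x⌋ ∈ Icc (-K : ℤ) K := by
  have : (0 : ℝ) ≤ K := K.cast_nonneg
  obtain ⟨hx1, hx2⟩ := abs_le.1 hx
  rw [mem_Icc, Int.le_floor, Int.floor_le_iff]
  push_cast
  constructor <;> nlinarith

lemma gridCell_mem {w : ℂ} (hw : ‖w‖ ≤ 1) : gridCell K w ∈ Icc (-K : ℤ) K ×ˢ Icc (-K : ℤ) K :=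
  mem_product.2 ⟨floor_mul_mem_Icc ((Complex.abs_re_le_norm w).trans hw),
    floor_mul_mem_Icc ((Complex.abs_im_le_norm w).trans hw)⟩

lemma abs_sub_le_of_floor_mul_eq (hK : 0 < K) {x y : ℝ} (h : ⌊K * x⌋ = ⌊K * y⌋) :
    |x - y| ≤ 1 / K := by
  have hK' : (0 : ℝ) < K := by exact_mod_cast hK
  have := Int.abs_sub_lt_one_of_floor_eq_floor h
  rw [← mul_sub, abs_mul, Nat.abs_cast] at this
  exact (le_div_iff₀' hK').2 this.le

lemma norm_sub_le_of_gridCell_eq (hK : 0 < K) {z w : ℂ} (h : gridCell K z = gridCell K w) :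
    ‖z - w‖ ≤ 2 / K := by
  obtain ⟨hre, him⟩ := Prod.mk.inj h
  calc ‖z - w‖ ≤ |z.re - w.re| + |z.im - w.im| := Complex.norm_le_abs_re_add_abs_im _
    _ ≤ 1 / K + 1 / K :=
        add_le_add (abs_sub_le_of_floor_mul_eq hK hre) (abs_sub_le_of_floor_mul_eq hK him)
    _ = 2 / K := by ring

lemma exists_finset_subset_forall_norm_sub_le (hK : 0 < K) {n : ℕ} {B : Set (Fin n → ℂ)}
    (hB : ∀ z ∈ B, ∀ i, ‖z i‖ ≤ 1) :
    ∃ T : Finset (Fin n → ℂ), (T : Set (Fin n → ℂ)) ⊆ B ∧ #T ≤ ((2 * K + 1) ^ 2) ^ n ∧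
      ∀ z ∈ B, ∃ t ∈ T, ∀ i, ‖z i - t i‖ ≤ 2 / K := by
  set cells : Finset (Fin n → ℤ × ℤ) :=
    Fintype.piFinset fun _ => Icc (-K : ℤ) K ×ˢ Icc (-K : ℤ) K
  have hcells : ∀ z ∈ B, gridCell K ∘ z ∈ cells := fun z hz =>
    Fintype.mem_piFinset.2 fun i => gridCell_mem (hB z hz i)
  obtain ⟨S, hSB, hS⟩ := B.exists_subset_bijOn (gridCell K ∘ ·)
  have hfinite : S.Finite := Set.Finite.of_finite_image
    (cells.finite_toSet.subset (Set.image_subset_iff.2 fun z hz => hcells z (hSB hz))) hS.injOn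
  refine ⟨hfinite.toFinset, by simpa using hSB, ?_, fun z hz => ?_⟩
  · calc #hfinite.toFinset ≤ #cells :=
          card_le_card_of_injOn _ (fun z hz => hcells z (hSB (by simpa using hz)))
            (by simpa using hS.injOn)
      _ = ((2 * K + 1) ^ 2) ^ n := by
          simp only [cells, Fintype.card_piFinset_const, card_product, Int.card_Icc]
          congr 1
          rw [sq]
          congr <;> lia
  · obtain ⟨t, ht, hcell⟩ := hS.surjOn ⟨z, hz, rfl⟩
    exact ⟨t, by simpa using ht, fun i => norm_sub_le_of_gridCell_eq hK (congrFun hcell i).symm⟩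

end Net

section RandomPolynomials

lemma norm_prod_sub_prod_le {ι R : Type*} [NormedCommRing R] [NormOneClass R] (s : Finset ι)
    {a b : ι → R} (ha : ∀ i, ‖a i‖ ≤ 1) (hb : ∀ i, ‖b i‖ ≤ 1) :
    ‖∏ i ∈ s, a i - ∏ i ∈ s, b i‖ ≤ ∑ i ∈ s, ‖a i - b i‖ := by
  classical
  induction s using Finset.induction_on with
  | empty => simp
  | insert j s hj ih =>
    have hprod : ‖∏ i ∈ s, a i‖ ≤ 1 :=
      (s.norm_prod_le a).trans (prod_le_one (fun _ _ => norm_nonneg _) fun i _ => ha i)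
    have htelescope : a j * ∏ i ∈ s, a i - b j * ∏ i ∈ s, b i =
        (a j - b j) * ∏ i ∈ s, a i + b j * (∏ i ∈ s, a i - ∏ i ∈ s, b i) := by ring
    rw [prod_insert hj, prod_insert hj, sum_insert hj, htelescope]
    calc _ ≤ ‖a j - b j‖ * ‖∏ i ∈ s, a i‖ + ‖b j‖ * ‖∏ i ∈ s, a i - ∏ i ∈ s, b i‖ :=
          (norm_add_le _ _).trans (add_le_add (norm_mul_le _ _) (norm_mul_le _ _))
      _ ≤ ‖a j - b j‖ * 1 + 1 * ∑ i ∈ s, ‖a i - b i‖ := by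
          gcongr
          exact hb j
      _ = _ := by rw [mul_one, one_mul]

lemma norm_pow_sub_pow_le {R : Type*} [NormedCommRing R] [NormOneClass R] {x y : R}
    (hx : ‖x‖ ≤ 1) (hy : ‖y‖ ≤ 1) (k : ℕ) : ‖x ^ k - y ^ k‖ ≤ k * ‖x - y‖ := by
  simpa using norm_prod_sub_prod_le (range k) (fun _ => hx) fun _ => hy

variable {n m : ℕ} {z w : Fin n → ℂ}

lemma norm_prod_pow_sub_prod_pow_le (hz : ∀ i, ‖z i‖ ≤ 1) (hw : ∀ i, ‖w i‖ ≤ 1) {δ : ℝ}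
    (hδ : ∀ i, ‖z i - w i‖ ≤ δ) {α : Fin n → ℕ} (hα : α ∈ antidiagonalTuple n m) :
    ‖∏ i, z i ^ α i - ∏ i, w i ^ α i‖ ≤ m * δ := by
  have hpow : ∀ {u : Fin n → ℂ}, (∀ i, ‖u i‖ ≤ 1) → ∀ i, ‖u i ^ α i‖ ≤ 1 := fun hu i => by
    rw [norm_pow]
    exact pow_le_one₀ (norm_nonneg _) (hu i)
  calc ‖∏ i, z i ^ α i - ∏ i, w i ^ α i‖
      ≤ ∑ i, ‖z i ^ α i - w i ^ α i‖ := norm_prod_sub_prod_le univ (hpow hz) (hpow hw)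
    _ ≤ ∑ i, (α i : ℝ) * δ := by
        gcongr with i
        exact (norm_pow_sub_pow_le (hz i) (hw i) _).trans (by gcongr; exact hδ i)
    _ = m * δ := by rw [← sum_mul, ← Nat.cast_sum, Nat.mem_antidiagonalTuple.1 hα]

lemma norm_mhEval_sub_mhEval_le (a : (Fin n → ℕ) → ℂ) (hz : ∀ i, ‖z i‖ ≤ 1)
    (hw : ∀ i, ‖w i‖ ≤ 1) {δ : ℝ} (hδ : ∀ i, ‖z i - w i‖ ≤ δ) :
    ‖mhEval n m a z - mhEval n m a w‖ ≤ (∑ α ∈ antidiagonalTuple n m, ‖a α‖) * (m * δ) := by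
  rw [mhEval, mhEval, ← sum_sub_distrib, sum_mul]
  refine norm_sum_le_of_le _ fun α hα => ?_
  rw [← mul_sub, norm_mul]
  gcongr
  exact norm_prod_pow_sub_prod_pow_le hz hw hδ hα

lemma norm_units_cast (η : ℤˣ) : ‖((η : ℤ) : ℂ)‖ = 1 := by
  rcases Int.units_eq_one_or η with rfl | rfl <;> simp

variable {c : (Fin n → ℕ) → ℂ} {σ : ℝ}

lemma exists_units_forall_mem_norm_mhEval_le (hσ : 0 < σ) (T : Finset (Fin n → ℂ))
    (hT : ∀ t ∈ T, ∑ α ∈ antidiagonalTuple n m, (‖c α‖ * ∏ i, ‖t i‖ ^ α i) ^ 2 ≤ σ ^ 2) :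
    ∃ ε : (Fin n → ℕ) → ℤˣ, ∀ t ∈ T, ‖mhEval n m (fun α => (ε α : ℤ) * c α) t‖ ≤
      2 * (σ * (Real.log (4 * #T) + 1 / 2)) := by
  obtain ⟨ε, hε⟩ := exists_units_norm_sum_mul_le
    (b := fun (t : T) (α : antidiagonalTuple n m) => c α * ∏ i, t.1 i ^ α.1 i) hσ fun t => by
      simp only [norm_mul, norm_prod, norm_pow]
      rw [sum_coe_sort _ fun α : Fin n → ℕ => (‖c α‖ * ∏ i, ‖t.1 i‖ ^ α i) ^ 2]
      exact hT t t.2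
  refine ⟨Function.extend Subtype.val ε 1, fun t ht => ?_⟩
  rw [mhEval, ← sum_coe_sort]
  simpa only [Subtype.val_injective.extend_apply, mul_assoc, Fintype.card_coe] using hε ⟨t, ht⟩

/-- A Kahane–Salem–Zygmund inequality, with an explicit error from the discretisation of `B`. -/
lemma exists_units_norm_mhEval_le (hσ : 0 < σ) {K : ℕ} (hK : 0 < K) {B : Set (Fin n → ℂ)}
    (hB : ∀ z ∈ B, ∀ i, ‖z i‖ ≤ 1)
    (hc : ∀ z ∈ B, ∑ α ∈ antidiagonalTuple n m, (‖c α‖ * ∏ i, ‖z i‖ ^ α i) ^ 2 ≤ σ ^ 2) :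
    ∃ ε : (Fin n → ℕ) → ℤˣ, ∀ z ∈ B, ‖mhEval n m (fun α => (ε α : ℤ) * c α) z‖ ≤
      2 * (σ * (Real.log (4 * ((2 * K + 1) ^ 2) ^ n) + 1 / 2)) +
        (∑ α ∈ antidiagonalTuple n m, ‖c α‖) * (m * (2 / K)) := by
  obtain ⟨T, hTB, hTcard, hTnet⟩ := exists_finset_subset_forall_norm_sub_le hK hB
  obtain ⟨ε, hε⟩ := exists_units_forall_mem_norm_mhEval_le hσ T fun t ht => hc t (hTB ht)
  refine ⟨ε, fun z hz => ?_⟩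
  obtain ⟨t, ht, hzt⟩ := hTnet z hz
  have hTpos : (0 : ℝ) < #T := by exact_mod_cast card_pos.2 ⟨t, ht⟩
  have hcard : (#T : ℝ) ≤ ((2 * K + 1) ^ 2) ^ n := by exact_mod_cast hTcard
  have hdiff := norm_mhEval_sub_mhEval_le (m := m) (fun α => (ε α : ℤ) * c α) (hB z hz)
    (hB t (hTB ht)) hzt
  simp only [norm_mul, norm_units_cast, one_mul] at hdiff
  refine (norm_le_norm_add_norm_sub' _ _).trans (add_le_add ((hε t ht).trans ?_) hdiff)
  gcongr

end RandomPolynomials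

section LowerBound

lemma multinomial_le_factorial {n m : ℕ} {α : Fin n → ℕ} (hα : α ∈ antidiagonalTuple n m) :
    Nat.multinomial univ α ≤ m.factorial := by
  rw [Nat.multinomial, Nat.mem_antidiagonalTuple.1 hα]
  exact Nat.div_le_self _ _

lemma mul_sq_le_rpow_sq_mul {M F R q : ℝ} (hM : 0 ≤ M) (hMF : M ≤ F) (hR : 0 ≤ R) (hq : 1 ≤ q)
    (hq2 : q ≤ 2) (h : M * R ^ q ≤ 1) : (M * R) ^ 2 ≤ (F ^ (1 - 1 / q)) ^ 2 * (M * R ^ q) := by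
  have hq0 : 0 < q := zero_lt_one.trans_le hq
  have hs : 0 ≤ 1 - 1 / q := sub_nonneg.2 ((div_le_one hq0).2 hq)
  have hY : 0 ≤ M * R ^ q := by positivity
  have hfactor : M * R = M ^ (1 - 1 / q) * (M * R ^ q) ^ (1 / q) := by
    rw [Real.mul_rpow hM (by positivity), ← Real.rpow_mul hR, mul_one_div_cancel hq0.ne',
      Real.rpow_one, ← mul_assoc, ← Real.rpow_add_of_nonneg hM hs (by positivity),
      sub_add_cancel, Real.rpow_one]
  have hsq : ((M * R ^ q) ^ (1 / q)) ^ 2 ≤ M * R ^ q := by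
    rw [← Real.rpow_mul_natCast hY, one_div_mul_eq_div]
    exact (Real.rpow_le_rpow_of_exponent_ge' hY h zero_le_one ((one_le_div hq0).2 hq2)).trans_eq
      (Real.rpow_one _)
  rw [hfactor, mul_pow]
  gcongr

variable {n m : ℕ} {p q : ℝ≥0∞}

lemma pNorm_one [NeZero n] : pNorm p (1 : Fin n → ℂ) = (n : ℝ) ^ (1 / p.toReal) := by
  by_cases hp : p = ∞ <;> simp [pNorm, hp]

variable [Fact (1 ≤ p)] [Fact (1 ≤ q)]

lemma sum_sq_multinomial_mul_prod_pow_le (hp : p ≤ 2) {z : Fin n → ℂ} (hz : pNorm p z ≤ 1) :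
    ∑ α ∈ antidiagonalTuple n m, (Nat.multinomial univ α * ∏ i, ‖z i‖ ^ α i) ^ 2 ≤
      ((m.factorial : ℝ) ^ (1 - 1 / p.toReal)) ^ 2 := by
  have hp_top : p ≠ ∞ := ne_top_of_le_ne_top ENNReal.ofNat_ne_top hp
  have hp_two : p.toReal ≤ 2 := by simpa using ENNReal.toReal_mono ENNReal.ofNat_ne_top hp
  set Y : (Fin n → ℕ) → ℝ := fun α => Nat.multinomial univ α * (∏ i, ‖z i‖ ^ α i) ^ p.toReal
  have hY : ∀ α ∈ antidiagonalTuple n m, 0 ≤ Y α := fun _ _ => by positivity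
  have hYsum : ∑ α ∈ antidiagonalTuple n m, Y α ≤ 1 :=
    sum_multinomial_mul_prod_pow_rpow_le_one hp_top hz
  calc ∑ α ∈ antidiagonalTuple n m, (Nat.multinomial univ α * ∏ i, ‖z i‖ ^ α i) ^ 2
      ≤ ∑ α ∈ antidiagonalTuple n m, ((m.factorial : ℝ) ^ (1 - 1 / p.toReal)) ^ 2 * Y α := by
        gcongr with α hα
        exact mul_sq_le_rpow_sq_mul (by positivity) (by exact_mod_cast multinomial_le_factorial hα)
          (by positivity) (one_le_toReal hp_top) hp_two ((single_le_sum hY hα).trans hYsum)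
    _ ≤ ((m.factorial : ℝ) ^ (1 - 1 / p.toReal)) ^ 2 := by
        rw [← mul_sum]
        exact mul_le_of_le_one_right (by positivity) hYsum

/-- For `p = ∞` the junk value `1 / p.toReal = 0` is the intended reciprocal. -/
lemma pNorm_le_rpow_mul_pNorm (hqp : q ≤ p) (hq : q ≠ ∞) (z : Fin n → ℂ) :
    pNorm q z ≤ (n : ℝ) ^ (1 / q.toReal - 1 / p.toReal) * pNorm p z := by
  have hq0 : 0 < q.toReal := zero_lt_one.trans_le (one_le_toReal hq)
  have hN : 0 ≤ pNorm p z := pNorm_nonneg z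
  suffices h : ∑ i, ‖z i‖ ^ q.toReal ≤
      ((n : ℝ) ^ (1 / q.toReal - 1 / p.toReal) * pNorm p z) ^ q.toReal by
    rw [← Real.rpow_inv_le_iff_of_pos (by positivity) (by positivity) hq0, ← one_div] at h
    rwa [pNorm, if_neg hq]
  rw [Real.mul_rpow (by positivity) hN, ← Real.rpow_mul (by positivity), sub_mul,
    one_div_mul_cancel hq0.ne']
  by_cases hp : p = ∞
  · calc ∑ i, ‖z i‖ ^ q.toReal ≤ ∑ _i : Fin n, pNorm p z ^ q.toReal := by
          gcongr with i
          exact norm_le_pNorm z i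
      _ = _ := by simp [hp]
  · have hp0 : 0 < p.toReal := zero_lt_one.trans_le (one_le_toReal hp)
    have hr : 1 ≤ p.toReal / q.toReal := (one_le_div hq0).2 (ENNReal.toReal_mono hp hqp)
    have hN_pow : ∑ i, ‖z i‖ ^ p.toReal = pNorm p z ^ p.toReal := by
      rw [pNorm, if_neg hp, one_div, Real.rpow_inv_rpow (by positivity) hp0.ne']
    refine (Real.rpow_le_rpow_iff (by positivity) (by positivity) (zero_lt_one.trans_le hr)).1 ?_
    calc (∑ i, ‖z i‖ ^ q.toReal) ^ (p.toReal / q.toReal)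
        ≤ (n : ℝ) ^ (p.toReal / q.toReal - 1) *
            ∑ i, (‖z i‖ ^ q.toReal) ^ (p.toReal / q.toReal) := by
          simpa using Real.rpow_sum_le_const_mul_sum_rpow_of_nonneg (f := fun i => ‖z i‖ ^ q.toReal)
            univ hr fun i _ => by positivity
      _ = (n : ℝ) ^ (p.toReal / q.toReal - 1) * pNorm p z ^ p.toReal := by
          simp_rw [← Real.rpow_mul (norm_nonneg _), mul_div_cancel₀ _ hq0.ne', hN_pow]
      _ = _ := by
          rw [Real.mul_rpow (by positivity) (by positivity), ← Real.rpow_mul (by positivity),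
            ← Real.rpow_mul hN, mul_div_cancel₀ _ hq0.ne']
          congr 2
          field_simp

lemma polyNorm_le_rpow_pow_mul_polyNorm (hqp : q ≤ p) (hq : q ≠ ∞) (a : (Fin n → ℕ) → ℂ) :
    polyNorm p m a ≤ ((n : ℝ) ^ (1 / q.toReal - 1 / p.toReal)) ^ m * polyNorm q m a := by
  have := polyNorm_nonneg (p := q) (m := m) a
  refine polyNorm_le fun z hz => (norm_mhEval_le_polyNorm_mul_pow (p := q) a z).trans ?_
  rw [mul_comm]
  gcongr
  · exact pNorm_nonneg z
  · exact (pNorm_le_rpow_mul_pNorm hqp hq z).trans (mul_le_of_le_one_right (by positivity) hz.le)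

/-- Multiplying by the same signs a second time turns the signed polynomial into
`(∑ i, z i) ^ m`. -/
lemma rpow_pow_le_chiMon_mul_polyNorm [NeZero n] (hm : m ≠ 0) (hqp : q ≤ p) (hq : q ≠ ∞)
    (ε : (Fin n → ℕ) → ℤˣ) :
    ((n : ℝ) ^ (1 - 1 / q.toReal)) ^ m ≤
      chiMon p m n * polyNorm q m (fun α => (ε α : ℤ) * Nat.multinomial univ α) := by
  set a : (Fin n → ℕ) → ℂ := fun α => (ε α : ℤ) * Nat.multinomial univ α
  have hn : (0 : ℝ) < n := by exact_mod_cast Nat.pos_of_ne_zero (NeZero.ne n)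
  have hsum : mhEval n m (fun α => (ε α : ℤ) * a α) 1 = (n : ℂ) ^ m := by
    have hsq : ∀ α, ((ε α : ℤ) : ℂ) * (ε α : ℤ) = 1 := fun α => by
      exact_mod_cast Int.units_coe_mul_self (ε α)
    simp only [mhEval, a, ← mul_assoc, hsq, one_mul]
    simpa using sum_multinomial_mul_prod_pow m (1 : Fin n → ℂ)
  have hchi : polyNorm p m (fun α => (ε α : ℤ) * a α) ≤ chiMon p m n * polyNorm p m a :=
    polyNorm_mul_le_chiMon_mul_polyNorm hm (fun α => (norm_units_cast _).le) a
  have hpow : (0 : ℝ) < (n ^ (1 / q.toReal)) ^ m := by positivity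
  refine le_of_mul_le_mul_right ?_ hpow
  calc ((n : ℝ) ^ (1 - 1 / q.toReal)) ^ m * (n ^ (1 / q.toReal)) ^ m
      = ‖mhEval n m (fun α => (ε α : ℤ) * a α) 1‖ := by
        rw [hsum, ← mul_pow, ← Real.rpow_add hn, sub_add_cancel, Real.rpow_one, norm_pow,
          Complex.norm_natCast]
    _ ≤ polyNorm p m (fun α => (ε α : ℤ) * a α) * (n ^ (1 / p.toReal)) ^ m :=
        (norm_mhEval_le_polyNorm_mul_pow (p := p) _ _).trans_eq (by rw [pNorm_one])
    _ ≤ chiMon p m n * (((n : ℝ) ^ (1 / q.toReal - 1 / p.toReal)) ^ m * polyNorm q m a) *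
          (n ^ (1 / p.toReal)) ^ m := by
        gcongr
        exact hchi.trans (mul_le_mul_of_nonneg_left (polyNorm_le_rpow_pow_mul_polyNorm hqp hq a)
          chiMon_nonneg)
    _ = chiMon p m n * polyNorm q m a * (n ^ (1 / q.toReal)) ^ m := by
        rw [← sub_add_cancel (1 / q.toReal) (1 / p.toReal), Real.rpow_add hn, sub_add_cancel,
          mul_pow]
        ring

/-- `2 * K + 1` with `K = 2 * m * n ^ m`, which makes the discretisation error of
`exists_units_norm_mhEval_le` equal to `1`. -/
lemma two_mul_log_add_two_le_pow (hn : n ≠ 0) (hm : m ≠ 0) (hnm : (n : ℝ) ≤ Real.exp m) :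
    2 * Real.log (4 * ((2 * (2 * m * n ^ m) + 1) ^ 2) ^ n) + 2 ≤ (88 * Real.exp 1) ^ m := by
  have hn1 : (1 : ℝ) ≤ n := by exact_mod_cast Nat.one_le_iff_ne_zero.2 hn
  have hm1 : (1 : ℝ) ≤ m := by exact_mod_cast Nat.one_le_iff_ne_zero.2 hm
  have hnm1 : (1 : ℝ) ≤ (n : ℝ) ^ m := one_le_pow₀ hn1
  have hfour : 4 ≤ Real.exp 2 := by
    rw [show (2 : ℝ) = 1 + 1 by norm_num, Real.exp_add]
    nlinarith [Real.add_one_le_exp 1]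
  have hbase : 2 * (2 * m * (n : ℝ) ^ m) + 1 ≤ Real.exp (4 * m ^ 2) := by
    calc 2 * (2 * m * (n : ℝ) ^ m) + 1 ≤ 4 * (m + 1) * (n : ℝ) ^ m := by linarith
      _ ≤ Real.exp 2 * Real.exp m * Real.exp m ^ m := by
          gcongr
          exact Real.add_one_le_exp _
      _ = Real.exp (2 + m + m * m) := by rw [← Real.exp_nat_mul, Real.exp_add, Real.exp_add]
      _ ≤ Real.exp (4 * m ^ 2) := Real.exp_le_exp.2 (by nlinarith)
  have hlog : Real.log (4 * ((2 * (2 * m * n ^ m) + 1) ^ 2) ^ n) ≤ 2 + 8 * m ^ 2 * n := by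
    rw [Real.log_le_iff_le_exp (by positivity)]
    calc 4 * ((2 * (2 * m * (n : ℝ) ^ m) + 1) ^ 2) ^ n
        ≤ Real.exp 2 * (Real.exp (4 * m ^ 2) ^ 2) ^ n := by gcongr
      _ = Real.exp (2 + 8 * m ^ 2 * n) := by
          rw [← Real.exp_nat_mul, ← Real.exp_nat_mul, ← Real.exp_add]
          push_cast
          ring_nf
  have hm_sq : (1 : ℝ) ≤ (m : ℝ) ^ 2 := one_le_pow₀ hm1
  have hm_two : (m : ℝ) ≤ 2 ^ m := by exact_mod_cast m.lt_two_pow_self.le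
  calc 2 * Real.log (4 * ((2 * (2 * m * n ^ m) + 1) ^ 2) ^ n) + 2
      ≤ 22 * ((m : ℝ) ^ 2 * n) := by linarith [one_le_mul_of_one_le_of_one_le hm_sq hn1]
    _ ≤ 22 ^ m * ((2 ^ m) ^ 2 * Real.exp m) := by
        gcongr
        exact le_self_pow₀ (by norm_num) hm
    _ = (88 * Real.exp 1) ^ m := by
        rw [← pow_mul, mul_comm m 2, pow_mul, ← Real.exp_one_pow, ← mul_pow, ← mul_pow,
          ← mul_assoc]
        norm_num

lemma exists_units_polyNorm_multinomial_le (hn : n ≠ 0) (hm : m ≠ 0) (hq : q ≤ 2)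
    (hnm : (n : ℝ) ≤ Real.exp m) :
    ∃ ε : (Fin n → ℕ) → ℤˣ, polyNorm q m (fun α => (ε α : ℤ) * Nat.multinomial univ α) ≤
      (m.factorial : ℝ) ^ (1 - 1 / q.toReal) * (88 * Real.exp 1) ^ m := by
  have hq_top : q ≠ ∞ := ne_top_of_le_ne_top ENNReal.ofNat_ne_top hq
  set σ : ℝ := (m.factorial : ℝ) ^ (1 - 1 / q.toReal)
  have hσ : 1 ≤ σ := Real.one_le_rpow (by exact_mod_cast m.factorial_pos)
    (one_sub_one_div_toReal_nonneg hq_top)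
  have hK : 0 < 2 * m * n ^ m := by positivity
  obtain ⟨ε, hε⟩ := exists_units_norm_mhEval_le (m := m) (zero_lt_one.trans_le hσ) hK
    (B := {z : Fin n → ℂ | pNorm q z < 1}) (c := fun α => (Nat.multinomial univ α : ℂ))
    (fun z hz i => (norm_le_pNorm z i).trans (le_of_lt hz))
    (fun z hz => by
      simpa only [Complex.norm_natCast] using sum_sq_multinomial_mul_prod_pow_le hq (le_of_lt hz))
  have hsum : ∑ α ∈ antidiagonalTuple n m, ‖(Nat.multinomial univ α : ℂ)‖ = (n : ℝ) ^ m := by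
    simpa using sum_multinomial_mul_prod_pow m (1 : Fin n → ℝ)
  have herr : (n : ℝ) ^ m * (m * (2 / (2 * m * n ^ m))) = 1 := by field_simp
  refine ⟨ε, polyNorm_le fun z hz => (hε z hz).trans ?_⟩
  rw [hsum]
  push_cast
  rw [herr]
  have := two_mul_log_add_two_le_pow hn hm hnm
  calc _ ≤ σ * (2 * Real.log (4 * ((2 * (2 * m * n ^ m) + 1) ^ 2) ^ n) + 2) := by linarith
    _ ≤ σ * (88 * Real.exp 1) ^ m := by gcongr

lemma factorial_rpow_le (m : ℕ) {s : ℝ} (hs : 0 ≤ s) :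
    (m.factorial : ℝ) ^ s ≤ ((m : ℝ) ^ s) ^ m := by
  rw [Real.rpow_pow_comm (by positivity)]
  gcongr
  exact_mod_cast m.factorial_le_pow

lemma div_rpow_le_mul_chiMon_rpow (hn : n ≠ 0) (hm : m ≠ 0) (hq : q ≤ 2) (hqp : q ≤ p)
    (hnm : (n : ℝ) ≤ Real.exp m) :
    ((n : ℝ) / m) ^ (1 - 1 / q.toReal) ≤ 88 * Real.exp 1 * chiMon p m n ^ (1 / (m : ℝ)) := by
  have : NeZero n := ⟨hn⟩
  have hq_top : q ≠ ∞ := ne_top_of_le_ne_top ENNReal.ofNat_ne_top hq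
  have hs := one_sub_one_div_toReal_nonneg hq_top
  set s : ℝ := 1 - 1 / q.toReal
  obtain ⟨ε, hε⟩ := exists_units_polyNorm_multinomial_le hn hm hq hnm
  have hpow : ((n : ℝ) ^ s) ^ m ≤ chiMon p m n * ((m : ℝ) ^ s * (88 * Real.exp 1)) ^ m := by
    rw [mul_pow]
    exact (rpow_pow_le_chiMon_mul_polyNorm hm hqp hq_top ε).trans <|
      mul_le_mul_of_nonneg_left (hε.trans (by gcongr; exact factorial_rpow_le m hs)) chiMon_nonneg
  have hm0 : (0 : ℝ) < m := by exact_mod_cast Nat.pos_of_ne_zero hm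
  rw [← div_le_iff₀ (by positivity), ← div_pow] at hpow
  have hroot : (n : ℝ) ^ s / (m ^ s * (88 * Real.exp 1)) ≤ chiMon p m n ^ (1 / (m : ℝ)) := by
    rw [one_div, Real.le_rpow_inv_iff_of_pos (by positivity) chiMon_nonneg hm0]
    exact_mod_cast hpow
  rwa [← div_div, ← Real.div_rpow (by positivity) (by positivity), div_le_iff₀' (by positivity)]
    at hroot

lemma nat_ceil_log_le (hn : 2 ≤ n) : (⌈Real.log n⌉₊ : ℝ) ≤ 3 * Real.log n := by
  have hlog : Real.log 2 ≤ Real.log n := by gcongr; exact_mod_cast hn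
  have := Nat.ceil_lt_add_one (Real.log_natCast_nonneg n)
  linarith [Real.log_two_gt_d9]

lemma exists_div_log_rpow_le_mul_chiMon_rpow (hn : 2 ≤ n) :
    ∃ m : ℕ, 0 < m ∧ ((n : ℝ) / Real.log n) ^ (1 - 1 / (min p 2).toReal) ≤
      264 * Real.exp 1 * chiMon p m n ^ (1 / (m : ℝ)) := by
  have hlog : 0 < Real.log n := Real.log_pos (by exact_mod_cast hn)
  have hm : 0 < ⌈Real.log n⌉₊ := Nat.ceil_pos.2 hlog
  have hnm : (n : ℝ) ≤ Real.exp ⌈Real.log n⌉₊ :=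
    (Real.log_le_iff_le_exp (by positivity)).1 (Nat.le_ceil _)
  refine ⟨⌈Real.log n⌉₊, hm, ?_⟩
  set m := ⌈Real.log n⌉₊
  set s : ℝ := 1 - 1 / (min p 2).toReal
  have hs0 : 0 ≤ s := one_sub_one_div_toReal_nonneg min_two_ne_top
  have hs1 : s ≤ 1 := sub_le_self _ (by positivity)
  calc ((n : ℝ) / Real.log n) ^ s ≤ (3 * (n / m)) ^ s := by
        gcongr
        rw [div_le_iff₀ hlog, mul_right_comm, mul_div_assoc', le_div_iff₀ (by positivity), mul_comm]
        gcongr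
        exact nat_ceil_log_le hn
    _ = 3 ^ s * (n / m) ^ s := Real.mul_rpow (by norm_num) (by positivity)
    _ ≤ 3 * (88 * Real.exp 1 * chiMon p m n ^ (1 / (m : ℝ))) := by
        gcongr
        · exact Real.rpow_le_self_of_one_le (by norm_num) hs1
        · exact div_rpow_le_mul_chiMon_rpow (by omega) hm.ne' (min_le_right _ _)
            (min_le_left _ _) hnm
    _ = 264 * Real.exp 1 * chiMon p m n ^ (1 / (m : ℝ)) := by ring

end LowerBound

/-- `sup_m χ_mon(𝒫(^m ℓ_p^n))^{1/m}` is, up to an absolute constant,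
`(n / log n)^{1 - 1/min(p,2)}`. -/
theorem sup_chiMon_asymptotics :
    ∃ C : ℝ, 0 < C ∧ ∀ (p : ℝ≥0∞), 1 ≤ p → ∀ n : ℕ, 2 ≤ n →
      (1 / C) * ((n : ℝ) / Real.log n) ^ (1 - 1 / (min p 2).toReal)
          ≤ sSup {x : ℝ | ∃ m : ℕ, 0 < m ∧ x = chiMon p m n ^ ((1 : ℝ) / (m : ℝ))}
      ∧ sSup {x : ℝ | ∃ m : ℕ, 0 < m ∧ x = chiMon p m n ^ ((1 : ℝ) / (m : ℝ))}
          ≤ C * ((n : ℝ) / Real.log n) ^ (1 - 1 / (min p 2).toReal) := by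
  refine ⟨264 * Real.exp 1, by positivity, fun p hp n hn => ?_⟩
  have : Fact (1 ≤ p) := ⟨hp⟩
  have hupper : ∀ x ∈ {x : ℝ | ∃ m : ℕ, 0 < m ∧ x = chiMon p m n ^ ((1 : ℝ) / (m : ℝ))},
      x ≤ 264 * Real.exp 1 * ((n : ℝ) / Real.log n) ^ (1 - 1 / (min p 2).toReal) := by
    rintro x ⟨m, hm, rfl⟩
    refine (chiMon_rpow_one_div_le hn hm.ne').trans ?_
    gcongr
    norm_num
  obtain ⟨m, hm, hlower⟩ := exists_div_log_rpow_le_mul_chiMon_rpow (p := p) hn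
  refine ⟨?_, csSup_le ⟨_, 1, one_pos, rfl⟩ hupper⟩
  rw [one_div_mul_eq_div, div_le_iff₀' (by positivity)]
  exact hlower.trans (mul_le_mul_of_nonneg_left (le_csSup ⟨_, hupper⟩ ⟨m, hm, rfl⟩) (by positivity))
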